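/- (δ-separateness propagates through the layers.) There exists an absolute constant C > 1 such that: if δ ≤ 1/(C L), m ≥ C·L·log(n·L)/δ⁶, ‖x_i‖ = 1 for every i ∈ [n], and ‖x_i − x_j‖ ≥ δ for every pair i ≠ j, then with probability at least 1 − e^{−δ⁶·m/(C·L)} over the random matrices A and W_1,…,W_L, for all i ≠ j ∈ [n] and all ℓ ∈ {0, 1, …, L}: ‖(I − h_{i,ℓ} h_{i,ℓ}ᵀ/‖h_{i,ℓ}‖²)·h_{j,ℓ}‖ ≥ δ/2. -/

import Mathlib

/-!
Fix two samples and write `N`, `N'` for the squared norms of their layer vectors and `D` for the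
squared distance between them. Given the previous layers, a layer `u ↦ relu (M u)` with i.i.d.
`N(0, 2/m)` weights makes the new `N`, `N'`, `D` sums of `m` i.i.d. contributions of the rows.

* The squared norm is preserved in mean. The moment generating function of the square of a
  rectified Gaussian is explicit, so a Chernoff bound gives a deviation of at most `δ³` outside an
  event of probability `exp (-Ω(δ⁶ m))`.
* With `a = ⟨w, u⟩` and `b = ⟨w, v⟩` for a row `w`, averaging over `w` and `-w` gives
  `E (a⁺ - b⁺)² = E (a - b)² / 2 - E (ab)⁻`. The cross loss `(ab)⁻` is supported on sign
  disagreement, which forces `|a|` to be small compared with the part of `b` independent of `a`,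
  so its mean is cubic in the distance when the vectors are close; in general it costs at most half
  of `D`. Hence `D` drops by only `O(δ³)`, or else remains above `δ²`.

Since `δ ≤ 1/(C L)`, the accumulated loss `O(L δ³)` is a small fraction of `δ²`. At every layer `N`
and `N'` are thus close to `1` and `D` is close to at least `δ²`. With `P = ⟨u, v⟩ ≥ 0`, the
identity `4 (N N' - P²) = 2 D (N + N') - D² - (N - N')²` then bounds the squared residual
`(N N' - P²) / N` below by `δ²/4`. The failure probabilities are combined by Fubini over the weights
of one layer and a union bound over pairs and layers, which the lower bound on `m` absorbs.
-/

open MeasureTheory ProbabilityTheory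

noncomputable section

namespace DNNPaper

/-! ### Elementary linear algebra on plain function matrices -/

def mulVec {p q : ℕ} (M : Fin p → Fin q → ℝ) (v : Fin q → ℝ) : Fin p → ℝ :=
  fun i => ∑ j, M i j * v j

def mmul {p q r : ℕ} (M : Fin p → Fin q → ℝ) (N : Fin q → Fin r → ℝ) :
    Fin p → Fin r → ℝ :=
  fun i k => ∑ j, M i j * N j k

def transpose {p q : ℕ} (M : Fin p → Fin q → ℝ) : Fin q → Fin p → ℝ :=
  fun j i => M i j

def dot {p : ℕ} (u v : Fin p → ℝ) : ℝ := ∑ i, u i * v i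

def outer {p q : ℕ} (u : Fin p → ℝ) (v : Fin q → ℝ) : Fin p → Fin q → ℝ :=
  fun i j => u i * v j

def idMat (p : ℕ) : Fin p → Fin p → ℝ := fun i j => if i = j then 1 else 0

def diagMat {p : ℕ} (dg : Fin p → ℝ) : Fin p → Fin p → ℝ :=
  fun i j => if i = j then dg i else 0

def relu {p : ℕ} (v : Fin p → ℝ) : Fin p → ℝ := fun k => max (v k) 0

/-- diagonal entries of the ReLU sign matrix of a pre-activation vector -/
def signOf {p : ℕ} (g : Fin p → ℝ) : Fin p → ℝ := fun k => if 0 ≤ g k then 1 else 0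

/-- Euclidean norm -/
def l2 {p : ℕ} (v : Fin p → ℝ) : ℝ := Real.sqrt (∑ k, v k ^ 2)

/-- max-norm -/
def linf {p : ℕ} (v : Fin p → ℝ) : ℝ := ⨆ k, |v k|

/-- number of nonzero entries -/
def l0 {p : ℕ} (v : Fin p → ℝ) : ℕ := (Finset.univ.filter fun k => v k ≠ 0).card

/-- Frobenius norm -/
def frob {p q : ℕ} (M : Fin p → Fin q → ℝ) : ℝ := Real.sqrt (∑ i, ∑ j, M i j ^ 2)

/-- spectral norm (ℓ₂ operator norm) -/
def spec {p q : ℕ} (M : Fin p → Fin q → ℝ) : ℝ :=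
  sSup {r | ∃ v : Fin q → ℝ, l2 v ≤ 1 ∧ r = l2 (mulVec M v)}

/-- trace (Frobenius) inner product -/
def innerF {p q : ℕ} (M N : Fin p → Fin q → ℝ) : ℝ := ∑ i, ∑ j, M i j * N i j

/-- `‖W‖₂ = max_ℓ ‖W_ℓ‖₂` for a tuple of matrices -/
def tupleSpec {m L : ℕ} (W : Fin L → Fin m → Fin m → ℝ) : ℝ := ⨆ ℓ, spec (W ℓ)

/-! ### The network -/

variable {𝔡 m d L : ℕ}

/-- `Wat W ℓ` is the weight matrix of layer `ℓ ∈ {1,…,L}` (identity outside this range). -/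
def Wat (W : Fin L → Fin m → Fin m → ℝ) (ℓ : ℕ) : Fin m → Fin m → ℝ :=
  if h : 1 ≤ ℓ ∧ ℓ ≤ L then W ⟨ℓ - 1, by omega⟩ else idMat m

/-- the forward (post-activation) vectors `h_ℓ`, `ℓ = 0,1,…,L` -/
def hseq (A : Fin m → Fin 𝔡 → ℝ) (W : Fin L → Fin m → Fin m → ℝ) (x : Fin 𝔡 → ℝ) :
    ℕ → Fin m → ℝ
  | 0 => relu (mulVec A x)
  | ℓ + 1 =>
      if ℓ + 1 ≤ L then relu (mulVec (Wat W (ℓ + 1)) (hseq A W x ℓ)) else hseq A W x ℓ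

/-- the pre-activation vectors `g_ℓ`, `ℓ = 0,1,…,L` -/
def gseq (A : Fin m → Fin 𝔡 → ℝ) (W : Fin L → Fin m → Fin m → ℝ) (x : Fin 𝔡 → ℝ) :
    ℕ → Fin m → ℝ
  | 0 => mulVec A x
  | ℓ + 1 => mulVec (Wat W (ℓ + 1)) (hseq A W x ℓ)

/-- `chainProd W Dfun a b = (D_b W_b) (D_{b-1} W_{b-1}) ⋯ (D_a W_a)` where `D_ℓ` is the
diagonal matrix with entries `Dfun ℓ`; it is the identity when `b < a`, and factors with
index outside `{1,…,L}` are skipped. -/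
def chainProd (W : Fin L → Fin m → Fin m → ℝ) (Dfun : ℕ → Fin m → ℝ) (a : ℕ) :
    ℕ → Fin m → Fin m → ℝ
  | 0 => idMat m
  | b + 1 =>
      if a ≤ b + 1 ∧ b + 1 ≤ L then
        mmul (mmul (diagMat (Dfun (b + 1))) (Wat W (b + 1))) (chainProd W Dfun a b)
      else chainProd W Dfun a b

/-- `prodDW A W x a b = D_b W_b D_{b-1} W_{b-1} ⋯ D_a W_a` with the sign matrices of input `x` -/
def prodDW (A : Fin m → Fin 𝔡 → ℝ) (W : Fin L → Fin m → Fin m → ℝ) (x : Fin 𝔡 → ℝ)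
    (a b : ℕ) : Fin m → Fin m → ℝ :=
  chainProd W (fun ℓ => signOf (gseq A W x ℓ)) a b

/-- `Back_ℓ = B D_L W_L ⋯ D_ℓ W_ℓ` (equal to `B` for `ℓ = L+1`) -/
def backMat (B : Fin d → Fin m → ℝ) (A : Fin m → Fin 𝔡 → ℝ)
    (W : Fin L → Fin m → Fin m → ℝ) (x : Fin 𝔡 → ℝ) (ℓ : ℕ) : Fin d → Fin m → ℝ :=
  mmul B (prodDW A W x ℓ L)

/-- formula gradient w.r.t. `W_ℓ` with an arbitrary (fake) loss vector `v`:
`D_ℓ (Back_{ℓ+1}ᵀ v) h_{ℓ-1}ᵀ` -/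
def gradW (B : Fin d → Fin m → ℝ) (A : Fin m → Fin 𝔡 → ℝ)
    (W : Fin L → Fin m → Fin m → ℝ) (x : Fin 𝔡 → ℝ) (v : Fin d → ℝ) (ℓ : ℕ) :
    Fin m → Fin m → ℝ :=
  outer (mulVec (diagMat (signOf (gseq A W x ℓ)))
      (mulVec (transpose (backMat B A W x (ℓ + 1))) v))
    (hseq A W x (ℓ - 1))

/-- loss vector `B h_L − y` -/
def lossVec (B : Fin d → Fin m → ℝ) (A : Fin m → Fin 𝔡 → ℝ)
    (W : Fin L → Fin m → Fin m → ℝ) (x : Fin 𝔡 → ℝ) (y : Fin d → ℝ) : Fin d → ℝ :=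
  fun j => mulVec B (hseq A W x L) j - y j

/-- per-sample ℓ₂ regression loss `F_i` -/
def objFi (B : Fin d → Fin m → ℝ) (A : Fin m → Fin 𝔡 → ℝ)
    (W : Fin L → Fin m → Fin m → ℝ) (x : Fin 𝔡 → ℝ) (y : Fin d → ℝ) : ℝ :=
  (1 / 2) * l2 (lossVec B A W x y) ^ 2

/-- total objective `F` -/
def objF {n : ℕ} (B : Fin d → Fin m → ℝ) (A : Fin m → Fin 𝔡 → ℝ)
    (W : Fin L → Fin m → Fin m → ℝ) (x : Fin n → Fin 𝔡 → ℝ)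
    (y : Fin n → Fin d → ℝ) : ℝ :=
  ∑ i, objFi B A W (x i) (y i)

/-- formula gradient of the total objective w.r.t. `W_ℓ` -/
def gradF {n : ℕ} (B : Fin d → Fin m → ℝ) (A : Fin m → Fin 𝔡 → ℝ)
    (W : Fin L → Fin m → Fin m → ℝ) (x : Fin n → Fin 𝔡 → ℝ)
    (y : Fin n → Fin d → ℝ) (ℓ : ℕ) : Fin m → Fin m → ℝ :=
  ∑ i, gradW B A W (x i) (lossVec B A W (x i) (y i)) ℓ

/-! ### Random initialization -/

/-- a `p × q` random matrix with i.i.d. `N(0, v)` entries -/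
def gaussMat (p q : ℕ) (v : NNReal) : Measure (Fin p → Fin q → ℝ) :=
  Measure.pi fun _ => Measure.pi fun _ => gaussianReal 0 v

/-- joint law of `(A, W)` at random initialization -/
def initAW (𝔡 m L : ℕ) :
    Measure ((Fin m → Fin 𝔡 → ℝ) × (Fin L → Fin m → Fin m → ℝ)) :=
  (gaussMat m 𝔡 (2 / m)).prod (Measure.pi fun _ : Fin L => gaussMat m m (2 / m))

/-- joint law of `(A, W, B)` at random initialization -/
def initMeasure (𝔡 m d L : ℕ) :
    Measure ((Fin m → Fin 𝔡 → ℝ) ×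
      (Fin L → Fin m → Fin m → ℝ) × (Fin d → Fin m → ℝ)) :=
  (gaussMat m 𝔡 (2 / m)).prod
    ((Measure.pi fun _ : Fin L => gaussMat m m (2 / m)).prod (gaussMat d m (1 / d)))

section

open scoped NNReal

lemma integral_add_comp_neg {E : Type*} [MeasurableSpace E] [AddGroup E] [MeasurableNeg E]
    {μ : Measure E} [μ.IsNegInvariant] {f : E → ℝ} (hf : Integrable f μ) :
    ∫ x, (f x + f (-x)) ∂μ = 2 * ∫ x, f x ∂μ := by
  rw [integral_add hf hf.comp_neg, integral_neg_eq_self, two_mul]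

lemma exp_neg_le_one_sub_add_sq {y : ℝ} (hy : 0 ≤ y) : Real.exp (-y) ≤ 1 - y + y ^ 2 / 2 := by
  have hpos : 0 < 1 + y + y ^ 2 / 2 := by positivity
  rw [Real.exp_neg]
  calc (Real.exp y)⁻¹ ≤ (1 + y + y ^ 2 / 2)⁻¹ :=
        inv_anti₀ hpos (Real.quadratic_le_exp_of_nonneg hy)
    _ ≤ 1 - y + y ^ 2 / 2 := by
        rw [inv_le_iff_one_le_mul₀ hpos]
        nlinarith [sq_nonneg (y ^ 2)]

lemma mgf_neg_le_exp_of_nonneg {Ω : Type*} [MeasurableSpace Ω] {μ : Measure Ω}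
    [IsProbabilityMeasure μ] {Y : Ω → ℝ} (hY : MemLp Y 2 μ) (hY0 : ∀ ω, 0 ≤ Y ω)
    {θ : ℝ} (hθ : 0 ≤ θ) :
    mgf Y μ (-θ) ≤ Real.exp (-θ * μ[Y] + θ ^ 2 / 2 * ∫ ω, Y ω ^ 2 ∂μ) := by
  have hY1 : Integrable Y μ := hY.integrable (by norm_num)
  have hint : Integrable (fun ω ↦ 1 - θ * Y ω) μ := (integrable_const 1).sub (hY1.const_mul θ)
  have hint2 : Integrable (fun ω ↦ θ ^ 2 / 2 * Y ω ^ 2) μ := hY.integrable_sq.const_mul _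
  calc mgf Y μ (-θ) ≤ ∫ ω, (1 - θ * Y ω + θ ^ 2 / 2 * Y ω ^ 2) ∂μ := by
        refine integral_mono_of_nonneg (.of_forall fun ω ↦ (Real.exp_pos _).le)
          (hint.add hint2) (.of_forall fun ω ↦ ?_)
        have := exp_neg_le_one_sub_add_sq (mul_nonneg hθ (hY0 ω))
        simp only [neg_mul]
        linarith
    _ = -θ * μ[Y] + θ ^ 2 / 2 * ∫ ω, Y ω ^ 2 ∂μ + 1 := by
        rw [integral_add hint hint2, integral_sub (integrable_const 1) (hY1.const_mul θ),
          integral_const_mul, integral_const_mul, integral_const, probReal_univ, one_smul]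
        ring
    _ ≤ _ := Real.add_one_le_exp _

section Gaussian

variable {v : ℝ≥0} {θ : ℝ}

instance isNegInvariant_gaussianReal : (gaussianReal 0 v).IsNegInvariant where
  neg_eq_self := gaussianReal_map_neg.trans (by rw [neg_zero])

lemma integrable_pow_gaussianReal (v : ℝ≥0) (k : ℕ) :
    Integrable (fun x : ℝ ↦ x ^ k) (gaussianReal 0 v) :=
  integrable_pow_of_mem_interior_integrableExpSet (X := fun x ↦ x) (by simp) k

lemma integral_sq_gaussianReal (v : ℝ≥0) : ∫ x, x ^ 2 ∂(gaussianReal 0 v) = v := by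
  rw [← variance_of_integral_eq_zero (X := fun x ↦ x) (by fun_prop) (by simp)]
  exact variance_fun_id_gaussianReal

lemma integral_pow_four_gaussianReal (v : ℝ≥0) :
    ∫ x, x ^ 4 ∂(gaussianReal 0 v) = 3 * (v : ℝ) ^ 2 := by
  have hmgf : mgf (fun x ↦ x) (gaussianReal 0 v) =
      fun t ↦ (1 : Polynomial ℝ).eval t * Real.exp (v * t ^ 2 / 2) := by
    simp [mgf_fun_id_gaussianReal]
  have hderiv (p : Polynomial ℝ) : deriv (fun t ↦ p.eval t * Real.exp (v * t ^ 2 / 2)) =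
      fun t ↦ (p.derivative + .C (v : ℝ) * .X * p).eval t * Real.exp (v * t ^ 2 / 2) := by
    funext t
    have hexp := (((hasDerivAt_pow 2 t).const_mul (v : ℝ)).div_const 2).exp
    refine ((p.hasDerivAt t).mul hexp).deriv.trans ?_
    simp only [Polynomial.eval_add, Polynomial.eval_mul, Polynomial.eval_C, Polynomial.eval_X]
    push_cast
    ring
  have h := iteratedDeriv_mgf_zero (X := fun x ↦ x) (μ := gaussianReal 0 v) (by simp) 4
  rw [hmgf, iteratedDeriv_eq_iterate] at h
  simp only [Pi.pow_apply, Function.iterate_succ_apply, Function.iterate_zero_apply, hderiv] at h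
  rw [← h]
  simp only [Polynomial.derivative_one, Polynomial.derivative_mul, Polynomial.derivative_C,
    Polynomial.derivative_X, Polynomial.derivative_add, Polynomial.eval_add, Polynomial.eval_mul,
    Polynomial.eval_C, Polynomial.eval_X, mul_one, mul_zero, zero_mul, zero_add, add_zero, ne_eq,
    OfNat.ofNat_ne_zero, not_false_eq_true, zero_pow, zero_div, Real.exp_zero]
  ring

lemma integral_abs_pow_three_gaussianReal_le (v : ℝ≥0) :
    ∫ x, |x| ^ 3 ∂(gaussianReal 0 v) ≤ 2 * √v ^ 3 := by
  rcases eq_or_ne v 0 with rfl | hv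
  · simp
  obtain ⟨r, hr, hrv⟩ : ∃ r : ℝ, 0 < r ∧ √(v : ℝ) = r := ⟨_, by positivity, rfl⟩
  have hv2 : (v : ℝ) = r ^ 2 := by rw [← hrv, Real.sq_sqrt v.coe_nonneg]
  have hpt (x : ℝ) : |x| ^ 3 ≤ r / 2 * x ^ 2 + (2 * r)⁻¹ * x ^ 4 := by
    have hx : r / 2 * x ^ 2 + (2 * r)⁻¹ * x ^ 4 - |x| * x ^ 2 =
        (2 * r)⁻¹ * x ^ 2 * (r - |x|) ^ 2 := by
      rw [sub_sq, sq_abs]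
      field_simp
      ring
    have : 0 ≤ (2 * r)⁻¹ * x ^ 2 * (r - |x|) ^ 2 := by positivity
    rw [pow_succ', sq_abs]
    linarith
  calc ∫ x, |x| ^ 3 ∂(gaussianReal 0 v)
      ≤ ∫ x, (r / 2 * x ^ 2 + (2 * r)⁻¹ * x ^ 4) ∂(gaussianReal 0 v) :=
        integral_mono_of_nonneg (.of_forall fun x ↦ by positivity)
          (((integrable_pow_gaussianReal v 2).const_mul _).add
            ((integrable_pow_gaussianReal v 4).const_mul _)) (.of_forall hpt)
    _ = 2 * √v ^ 3 := by
        rw [integral_add ((integrable_pow_gaussianReal v 2).const_mul _)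
            ((integrable_pow_gaussianReal v 4).const_mul _), integral_const_mul,
          integral_const_mul, integral_sq_gaussianReal, integral_pow_four_gaussianReal, hrv, hv2]
        field_simp
        ring

lemma gaussianPDFReal_le (v : ℝ≥0) (x : ℝ) : gaussianPDFReal 0 v x ≤ (2 * √v)⁻¹ := by
  rcases eq_or_ne v 0 with rfl | hv
  · simp
  have hexp : Real.exp (-(x - 0) ^ 2 / (2 * v)) ≤ 1 :=
    Real.exp_le_one_iff.2 (div_nonpos_of_nonpos_of_nonneg (by nlinarith) (by positivity))
  have hsqrt : 2 * √(v : ℝ) ≤ √(2 * Real.pi * v) := by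
    refine Real.le_sqrt_of_sq_le ?_
    rw [mul_pow, Real.sq_sqrt v.coe_nonneg]
    nlinarith [Real.pi_gt_three, v.coe_nonneg]
  exact (mul_le_of_le_one_right (by positivity) hexp).trans (inv_anti₀ (by positivity) hsqrt)

lemma gaussianReal_abs_le_le (v : ℝ≥0) {t : ℝ} (ht : 0 ≤ t) :
    √v * (gaussianReal 0 v).real {x | |x| ≤ t} ≤ t := by
  rcases eq_or_ne v 0 with rfl | hv
  · simpa
  have hset : {x : ℝ | |x| ≤ t} = Set.Icc (-t) t := by
    ext x
    simp [abs_le]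
  have hint : ∫ x in Set.Icc (-t) t, gaussianPDFReal 0 v x ≤
      ∫ _ in Set.Icc (-t) t, (2 * √(v : ℝ))⁻¹ :=
    integral_mono (integrable_gaussianPDFReal 0 v).integrableOn (integrable_const _)
      (gaussianPDFReal_le v)
  rw [hset, measureReal_def, gaussianReal_apply_eq_integral 0 hv,
    ENNReal.toReal_ofReal (integral_nonneg fun x ↦ gaussianPDFReal_nonneg _ _ _)]
  refine (mul_le_mul_of_nonneg_left hint (by positivity)).trans_eq ?_
  rw [setIntegral_const, Real.volume_real_Icc_of_le (by linarith), smul_eq_mul]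
  have : √(v : ℝ) ≠ 0 := by positivity
  field_simp
  ring

lemma gaussianPDFReal_smul_exp_mul_sq (hv : v ≠ 0) (θ x : ℝ) :
    gaussianPDFReal 0 v x • Real.exp (θ * x ^ 2) =
      (√(2 * Real.pi * v))⁻¹ * Real.exp (-((1 - 2 * (θ * v)) / (2 * v)) * x ^ 2) := by
  rw [gaussianPDFReal_def, smul_eq_mul, mul_assoc, ← Real.exp_add]
  congr 2
  field_simp
  ring

lemma mgf_sq_gaussianReal (h : 2 * (θ * v) < 1) :
    mgf (fun x ↦ x ^ 2) (gaussianReal 0 v) θ = (√(1 - 2 * (θ * v)))⁻¹ := by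
  rcases eq_or_ne v 0 with rfl | hv
  · simp [mgf]
  have : 1 - 2 * (θ * v) ≠ 0 := by linarith
  rw [mgf, integral_gaussianReal_eq_integral_smul hv]
  simp only [gaussianPDFReal_smul_exp_mul_sq hv]
  rw [integral_const_mul, integral_gaussian, ← Real.sqrt_inv, ← Real.sqrt_mul (by positivity),
    ← Real.sqrt_inv]
  congr 1
  field_simp

lemma integrable_exp_mul_sq_gaussianReal (h : 2 * (θ * v) < 1) :
    Integrable (fun x ↦ Real.exp (θ * x ^ 2)) (gaussianReal 0 v) := by
  refine Integrable.of_integral_ne_zero fun h0 ↦ ?_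
  have := mgf_sq_gaussianReal h
  rw [mgf, h0] at this
  have : 0 < √(1 - 2 * (θ * v)) := Real.sqrt_pos.2 (by linarith)
  simp_all

lemma integrable_exp_mul_sq_posPart_gaussianReal (h : 2 * (θ * v) < 1) :
    Integrable (fun x ↦ Real.exp (θ * x⁺ ^ 2)) (gaussianReal 0 v) := by
  refine ((integrable_const 1).add (integrable_exp_mul_sq_gaussianReal h)).mono' (by fun_prop)
    (.of_forall fun x ↦ ?_)
  rw [Real.norm_of_nonneg (Real.exp_pos _).le]
  rcases le_total 0 x with hx | hx
  · simp [posPart_of_nonneg hx]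
  · simp [posPart_of_nonpos hx, Real.exp_nonneg]

lemma mgf_sq_posPart_gaussianReal (h : 2 * (θ * v) < 1) :
    mgf (fun x ↦ x⁺ ^ 2) (gaussianReal 0 v) θ = (1 + (√(1 - 2 * (θ * v)))⁻¹) / 2 := by
  have hsum (x : ℝ) : Real.exp (θ * x⁺ ^ 2) + Real.exp (θ * (-x)⁺ ^ 2) =
      1 + Real.exp (θ * x ^ 2) := by
    rcases le_total 0 x with hx | hx
    · simp [posPart_of_nonneg hx, posPart_of_nonpos (neg_nonpos.2 hx), add_comm]
    · simp [posPart_of_nonpos hx, posPart_of_nonneg (neg_nonneg.2 hx)]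
  have := integral_add_comp_neg (integrable_exp_mul_sq_posPart_gaussianReal h)
  simp only [hsum] at this
  rw [integral_add (integrable_const 1) (integrable_exp_mul_sq_gaussianReal h)] at this
  rw [← mgf, ← mgf, mgf_sq_gaussianReal h, integral_const, probReal_univ, one_smul] at this
  linarith

lemma mgf_sq_posPart_gaussianReal_le (h : |θ * v| ≤ 1 / 4) :
    mgf (fun x ↦ x⁺ ^ 2) (gaussianReal 0 v) θ ≤ Real.exp (θ * (v / 2) + θ ^ 2 * (2 * v ^ 2)) := by
  obtain ⟨h1, h2⟩ := abs_le.1 h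
  rw [mgf_sq_posPart_gaussianReal (by linarith)]
  set l := θ * v
  have hsqrt : (√(1 - 2 * l))⁻¹ ≤ 1 + l + 4 * l ^ 2 := by
    rw [← Real.sqrt_inv]
    refine Real.sqrt_le_iff.2 ⟨by nlinarith, ?_⟩
    rw [inv_le_iff_one_le_mul₀ (by linarith)]
    have : l ^ 3 ≤ 1 / 64 := by nlinarith [sq_nonneg l, sq_nonneg (l + 1/4)]
    have : 0 ≤ l ^ 2 * (5 - 10 * l - 32 * l ^ 3) :=
      mul_nonneg (sq_nonneg _) (by linarith)
    nlinarith
  calc (1 + (√(1 - 2 * l))⁻¹) / 2 ≤ θ * (v / 2) + θ ^ 2 * (2 * v ^ 2) + 1 := by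
        have : θ * (v / 2) + θ ^ 2 * (2 * v ^ 2) = l / 2 + 2 * l ^ 2 := by ring
        linarith
    _ ≤ _ := Real.add_one_le_exp _

end Gaussian

/-! ### The cross loss of a Gaussian pair -/

lemma posPart_sub_posPart_sq_add_neg (a b : ℝ) :
    (a⁺ - b⁺) ^ 2 + ((-a)⁺ - (-b)⁺) ^ 2 = (a - b) ^ 2 - 2 * (a * b)⁻ := by
  rcases le_total 0 a with ha | ha <;> rcases le_total 0 b with hb | hb
  · rw [posPart_of_nonneg ha, posPart_of_nonneg hb, posPart_of_nonpos (neg_nonpos.2 ha),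
      posPart_of_nonpos (neg_nonpos.2 hb), negPart_of_nonneg (mul_nonneg ha hb)]
    ring
  · rw [posPart_of_nonneg ha, posPart_of_nonpos hb, posPart_of_nonpos (neg_nonpos.2 ha),
      posPart_of_nonneg (neg_nonneg.2 hb), negPart_of_nonpos (mul_nonpos_of_nonneg_of_nonpos ha hb)]
    ring
  · rw [posPart_of_nonpos ha, posPart_of_nonneg hb, posPart_of_nonneg (neg_nonneg.2 ha),
      posPart_of_nonpos (neg_nonpos.2 hb), negPart_of_nonpos (mul_nonpos_of_nonpos_of_nonneg ha hb)]
    ring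
  · rw [posPart_of_nonpos ha, posPart_of_nonpos hb, posPart_of_nonneg (neg_nonneg.2 ha),
      posPart_of_nonneg (neg_nonneg.2 hb), negPart_of_nonneg (mul_nonneg_of_nonpos_of_nonpos ha hb)]
    ring

lemma posPart_sub_posPart_sq_le (a b : ℝ) : (a⁺ - b⁺) ^ 2 ≤ (a - b) ^ 2 := by
  have := posPart_sub_posPart_sq_add_neg a b
  have := negPart_nonneg (a * b)
  nlinarith [sq_nonneg ((-a)⁺ - (-b)⁺)]

lemma negPart_mul_le (a b : ℝ) : (a * b)⁻ ≤ (a - b) ^ 2 / 4 :=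
  sup_le (by nlinarith [sq_nonneg (a + b)]) (by positivity)

lemma negPart_mul_add_le {β : ℝ} (hβ : 0 < β) (x w : ℝ) :
    (x * (β * x + w))⁻ ≤ {x | β * |x| ≤ |w|}.indicator (fun _ ↦ w ^ 2 / (4 * β)) x := by
  by_cases hxw : β * |x| ≤ |w|
  · rw [Set.indicator_of_mem (show x ∈ {x | β * |x| ≤ |w|} by simpa using hxw)]
    refine sup_le ?_ (by positivity)
    rw [le_div_iff₀ (by positivity)]
    nlinarith [sq_nonneg (2 * β * x + w)]
  · rw [Set.indicator_of_notMem (show x ∉ {x | β * |x| ≤ |w|} by simpa using hxw),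
      negPart_eq_zero.2]
    have hle : |x| * |w| ≤ |x| * (β * |x|) :=
      mul_le_mul_of_nonneg_left (not_le.1 hxw).le (abs_nonneg x)
    have hxw' := neg_abs_le (x * w)
    rw [abs_mul] at hxw'
    nlinarith [abs_mul_abs_self x]

lemma sqrt_mul_integral_negPart_mul_add_gaussianReal_le (v : ℝ≥0) {β : ℝ} (hβ : 0 < β) (w : ℝ) :
    √v * ∫ x, (x * (β * x + w))⁻ ∂(gaussianReal 0 v) ≤ |w| ^ 3 / (4 * β ^ 2) := by
  have hset : {x : ℝ | β * |x| ≤ |w|} = {x | |x| ≤ |w| / β} := by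
    simp only [le_div_iff₀' hβ]
  have hmeas : MeasurableSet {x : ℝ | β * |x| ≤ |w|} :=
    measurableSet_le (by fun_prop) (by fun_prop)
  calc √v * ∫ x, (x * (β * x + w))⁻ ∂(gaussianReal 0 v)
      ≤ √v * ∫ x, {x | β * |x| ≤ |w|}.indicator (fun _ ↦ w ^ 2 / (4 * β)) x
          ∂(gaussianReal 0 v) := by
        refine mul_le_mul_of_nonneg_left ?_ (Real.sqrt_nonneg _)
        exact integral_mono_of_nonneg (.of_forall fun x ↦ negPart_nonneg _)
          ((integrable_const (w ^ 2 / (4 * β))).indicator hmeas)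
          (.of_forall (negPart_mul_add_le hβ · w))
    _ = √v * (gaussianReal 0 v).real {x | |x| ≤ |w| / β} * (|w| ^ 2 / (4 * β)) := by
        rw [integral_indicator_const _ hmeas, smul_eq_mul, hset, sq_abs, mul_assoc]
    _ ≤ |w| / β * (|w| ^ 2 / (4 * β)) := by
        gcongr
        exact gaussianReal_abs_le_le v (by positivity)
    _ = |w| ^ 3 / (4 * β ^ 2) := by
        field_simp

section NegInvariant

variable {E : Type*} [MeasurableSpace E] [AddGroup E] [MeasurableNeg E]
  {μ : Measure E} [μ.IsNegInvariant] {f g : E → ℝ}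

lemma integral_eq_zero_of_odd (hf : f.Odd) : ∫ x, f x ∂μ = 0 := by
  have := integral_neg_eq_self f μ
  simp only [hf _, integral_neg] at this
  linarith

lemma integral_posPart_sub_posPart_sq (hf : MemLp f 2 μ) (hg : MemLp g 2 μ) (hfo : f.Odd)
    (hgo : g.Odd) :
    ∫ x, ((f x)⁺ - (g x)⁺) ^ 2 ∂μ = (∫ x, (f x - g x) ^ 2 ∂μ) / 2 - ∫ x, (f x * g x)⁻ ∂μ := by
  have hsub : Integrable (fun x ↦ (f x - g x) ^ 2) μ := (hf.sub hg).integrable_sq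
  have hcross : Integrable (fun x ↦ (f x * g x)⁻) μ := (hf.integrable_mul hg).neg_part
  have hint : Integrable (fun x ↦ ((f x)⁺ - (g x)⁺) ^ 2) μ :=
    (hf.pos_part.sub hg.pos_part).integrable_sq
  have h := integral_add_comp_neg hint
  simp only [hfo _, hgo _, posPart_sub_posPart_sq_add_neg] at h
  rw [integral_sub hsub (hcross.const_mul 2), integral_const_mul] at h
  linarith

end NegInvariant

section GaussianPair

variable {Ω : Type*} [MeasurableSpace Ω] {P : Measure Ω} {X Y W : Ω → ℝ}

lemma hasLaw_gaussianReal_of_integral_eq_zero (hX : HasGaussianLaw X P) (hX0 : P[X] = 0) :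
    HasLaw X (gaussianReal 0 Var[X; P].toNNReal) P where
  aemeasurable := hX.aemeasurable
  map_eq := by rw [hX.map_eq_gaussianReal, hX0]

lemma sqrt_mul_integral_negPart_mul_add_le_of_indepFun {vX vW : ℝ≥0}
    (hX : HasLaw X (gaussianReal 0 vX) P) (hW : HasLaw W (gaussianReal 0 vW) P)
    (hXW : X ⟂ᵢ[P] W) {β : ℝ} (hβ : 0 < β) :
    √vX * ∫ ω, (X ω * (β * X ω + W ω))⁻ ∂P ≤ √vW ^ 3 / (2 * β ^ 2) := by
  have hlaw : HasLaw (fun ω ↦ (X ω, W ω)) ((gaussianReal 0 vX).prod (gaussianReal 0 vW)) P := by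
    have := hX.isProbabilityMeasure
    exact (indepFun_iff_hasLaw_prodMk_prod hX hW).1 hXW
  have hint : Integrable (fun p : ℝ × ℝ ↦ (p.1 * (β * p.1 + p.2))⁻)
      ((gaussianReal 0 vX).prod (gaussianReal 0 vW)) := by
    have hfst :=
      (memLp_id_gaussianReal' (μ := 0) (v := vX) 2 (by simp)).comp_fst (gaussianReal 0 vW)
    have hsnd :=
      (memLp_id_gaussianReal' (μ := 0) (v := vW) 2 (by simp)).comp_snd (gaussianReal 0 vX)
    exact (hfst.integrable_mul ((hfst.const_mul β).add hsnd)).neg_part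
  calc √vX * ∫ ω, (X ω * (β * X ω + W ω))⁻ ∂P
      = ∫ w, √vX * ∫ x, (x * (β * x + w))⁻ ∂(gaussianReal 0 vX) ∂(gaussianReal 0 vW) := by
        rw [integral_const_mul, ← integral_prod_symm _ hint,
          ← hlaw.integral_comp hint.aestronglyMeasurable]
        rfl
    _ ≤ ∫ w, |w| ^ 3 / (4 * β ^ 2) ∂(gaussianReal 0 vW) := by
        refine integral_mono_of_nonneg (.of_forall fun w ↦ mul_nonneg (Real.sqrt_nonneg _)
          (integral_nonneg fun x ↦ negPart_nonneg _)) (Integrable.div_const ?_ _)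
          (.of_forall (sqrt_mul_integral_negPart_mul_add_gaussianReal_le vX hβ))
        simpa only [norm_pow, Real.norm_eq_abs] using (integrable_pow_gaussianReal vW 3).norm
    _ ≤ 2 * √vW ^ 3 / (4 * β ^ 2) := by
        rw [integral_div]
        gcongr
        exact integral_abs_pow_three_gaussianReal_le vW
    _ = √vW ^ 3 / (2 * β ^ 2) := by
        field_simp
        ring

lemma hasGaussianLaw_sub_const_mul (h : HasGaussianLaw (fun ω ↦ (X ω, Y ω)) P) (β : ℝ) :
    HasGaussianLaw (fun ω ↦ (X ω, Y ω - β * X ω)) P :=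
  h.map_fun ((ContinuousLinearMap.fst ℝ ℝ ℝ).prod
    (ContinuousLinearMap.snd ℝ ℝ ℝ - β • ContinuousLinearMap.fst ℝ ℝ ℝ))

lemma indepFun_sub_regression (h : HasGaussianLaw (fun ω ↦ (X ω, Y ω)) P)
    (hX : Var[X; P] ≠ 0) :
    X ⟂ᵢ[P] fun ω ↦ Y ω - cov[X, Y; P] / Var[X; P] * X ω := by
  have := h.isProbabilityMeasure
  refine (hasGaussianLaw_sub_const_mul h _).indepFun_of_covariance_eq_zero ?_
  rw [covariance_fun_sub_right h.fst.memLp_two h.snd.memLp_two (h.fst.memLp_two.const_mul _),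
    covariance_const_mul_right, covariance_self h.fst.aemeasurable, div_mul_cancel₀ _ hX, sub_self]

lemma variance_sub_eq_of_indepFun (hX : MemLp X 2 P) (hY : MemLp Y 2 P) {β : ℝ}
    (hind : X ⟂ᵢ[P] fun ω ↦ Y ω - β * X ω) :
    Var[fun ω ↦ X ω - Y ω; P] =
      (1 - β) ^ 2 * Var[X; P] + Var[fun ω ↦ Y ω - β * X ω; P] := by
  have hsplit : (fun ω ↦ X ω - Y ω) = fun ω ↦ (1 - β) * X ω + -(Y ω - β * X ω) := by
    funext ω
    ring
  have hW : MemLp (fun ω ↦ -(Y ω - β * X ω)) 2 P := (hY.sub (hX.const_mul β)).neg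
  rw [hsplit, IndepFun.variance_fun_add (hX.const_mul _) hW
    (hind.comp (measurable_const_mul (1 - β)) measurable_neg), variance_const_mul,
    variance_fun_neg]

lemma sqrt_variance_mul_integral_negPart_mul_le_of_lt
    (h : HasGaussianLaw (fun ω ↦ (X ω, Y ω)) P) (hX : P[X] = 0) (hY : P[Y] = 0)
    (hlt : 2 * √Var[fun ω ↦ X ω - Y ω; P] < √Var[X; P]) :
    √Var[X; P] * ∫ ω, (X ω * Y ω)⁻ ∂P ≤ 2 * √Var[fun ω ↦ X ω - Y ω; P] ^ 3 := by
  have hσ := Real.sq_sqrt (variance_nonneg (fun ω ↦ X ω - Y ω) P)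
  have hτ := Real.sq_sqrt (variance_nonneg X P)
  set σ := √Var[fun ω ↦ X ω - Y ω; P]
  have hσ0 : 0 ≤ σ := Real.sqrt_nonneg _
  have hVar : Var[X; P] ≠ 0 := by
    rw [← hτ]
    exact pow_ne_zero 2 (by linarith)
  have hind := indepFun_sub_regression h hVar
  set β := cov[X, Y; P] / Var[X; P]
  set W := fun ω ↦ Y ω - β * X ω
  have hW0 : P[W] = 0 := by
    simp only [W]
    rw [integral_sub h.snd.integrable (h.fst.integrable.const_mul β), integral_const_mul, hX, hY]
    simp
  have hsplit : σ ^ 2 = ((1 - β) * √Var[X; P]) ^ 2 + √Var[W; P] ^ 2 := by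
    rw [hσ, mul_pow, hτ, Real.sq_sqrt (variance_nonneg _ _)]
    exact variance_sub_eq_of_indepFun h.fst.memLp_two h.snd.memLp_two hind
  have hW : √Var[W; P] ≤ σ := le_of_abs_le (abs_le_of_sq_le_sq (by nlinarith) hσ0)
  have hβ : 1 / 2 ≤ β := by
    have : (1 - β) * √Var[X; P] ≤ σ := le_of_abs_le (abs_le_of_sq_le_sq (by nlinarith) hσ0)
    by_contra! hβ
    nlinarith
  have key := sqrt_mul_integral_negPart_mul_add_le_of_indepFun
    (hasLaw_gaussianReal_of_integral_eq_zero h.fst hX)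
    (hasLaw_gaussianReal_of_integral_eq_zero (hasGaussianLaw_sub_const_mul h β).snd hW0)
    hind (by linarith : 0 < β)
  simp only [Real.coe_toNNReal _ (variance_nonneg _ _), add_sub_cancel] at key
  calc √Var[X; P] * ∫ ω, (X ω * Y ω)⁻ ∂P ≤ √Var[W; P] ^ 3 / (2 * β ^ 2) := key
    _ ≤ σ ^ 3 / (2 * (1 / 2) ^ 2) := by gcongr
    _ = 2 * σ ^ 3 := by ring

lemma sqrt_variance_mul_integral_negPart_mul_le (h : HasGaussianLaw (fun ω ↦ (X ω, Y ω)) P)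
    (hX : P[X] = 0) (hY : P[Y] = 0) :
    √Var[X; P] * ∫ ω, (X ω * Y ω)⁻ ∂P ≤ 2 * √Var[fun ω ↦ X ω - Y ω; P] ^ 3 := by
  rcases lt_or_ge (2 * √Var[fun ω ↦ X ω - Y ω; P]) (√Var[X; P]) with hlt | hle
  · exact sqrt_variance_mul_integral_negPart_mul_le_of_lt h hX hY hlt
  have := h.isProbabilityMeasure
  have hcross : ∫ ω, (X ω * Y ω)⁻ ∂P ≤ √Var[fun ω ↦ X ω - Y ω; P] ^ 2 / 4 := by
    rw [Real.sq_sqrt (variance_nonneg _ _), variance_of_integral_eq_zero (h.fun_sub.aemeasurable)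
      (by rw [integral_sub h.fst.integrable h.snd.integrable, hX, hY, sub_zero]), ← integral_div]
    exact integral_mono_of_nonneg (.of_forall fun ω ↦ negPart_nonneg _)
      (h.fun_sub.memLp_two.integrable_sq.div_const 4) (.of_forall fun ω ↦ negPart_mul_le _ _)
  set σ := √Var[fun ω ↦ X ω - Y ω; P]
  have hσ0 : 0 ≤ σ := Real.sqrt_nonneg _
  calc √Var[X; P] * ∫ ω, (X ω * Y ω)⁻ ∂P ≤ 2 * σ * (σ ^ 2 / 4) := by gcongr
    _ ≤ 2 * σ ^ 3 := by nlinarith [pow_nonneg hσ0 3]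

end GaussianPair

section DotProduct

variable {ι : Type*} [Fintype ι]

lemma dotProduct_self_nonneg (u : ι → ℝ) : 0 ≤ u ⬝ᵥ u := by
  simpa only [star_trivial] using dotProduct_star_self_nonneg u

lemma dotProduct_sub_sub_self (u v : ι → ℝ) :
    (u - v) ⬝ᵥ (u - v) = u ⬝ᵥ u + v ⬝ᵥ v - 2 * (u ⬝ᵥ v) := by
  rw [sub_dotProduct, dotProduct_sub, dotProduct_sub, dotProduct_comm v u]
  ring

lemma dotProduct_sub_sub_self_le (u v : ι → ℝ) :
    (u - v) ⬝ᵥ (u - v) ≤ 2 * (u ⬝ᵥ u + v ⬝ᵥ v) := by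
  have h := dotProduct_self_nonneg (u + v)
  rw [add_dotProduct, dotProduct_add, dotProduct_add, dotProduct_comm v u] at h
  rw [dotProduct_sub_sub_self]
  linarith

lemma dotProduct_sub_div_smul_self {u v : ι → ℝ} (hu : u ⬝ᵥ u ≠ 0) :
    (v - (u ⬝ᵥ v / u ⬝ᵥ u) • u) ⬝ᵥ (v - (u ⬝ᵥ v / u ⬝ᵥ u) • u) =
      v ⬝ᵥ v - (u ⬝ᵥ v) ^ 2 / u ⬝ᵥ u := by
  rw [dotProduct_sub_sub_self]
  simp only [dotProduct_smul, smul_dotProduct, smul_eq_mul, dotProduct_comm v u]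
  field_simp
  ring

lemma dotProduct_sub_mul_add_le {u v : ι → ℝ} (huv : 0 ≤ u ⬝ᵥ v) :
    (u - v) ⬝ᵥ (u - v) * (u ⬝ᵥ u + v ⬝ᵥ v) ≤
      4 * (u ⬝ᵥ u * v ⬝ᵥ v - (u ⬝ᵥ v) ^ 2) + (u ⬝ᵥ u - v ⬝ᵥ v) ^ 2 := by
  -- `4 (‖u‖² ‖v‖² - ⟨u, v⟩²) + (‖u‖² - ‖v‖²)² = D (‖u‖² + ‖v‖² + 2 ⟨u, v⟩)` with `D = ‖u - v‖²`
  have hD := dotProduct_self_nonneg (u - v)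
  rw [dotProduct_sub_sub_self] at hD ⊢
  nlinarith [mul_nonneg hD huv]

end DotProduct

/-! ### Gaussian rows -/

/-- The law of a vector of independent centred Gaussian coordinates of variance `s`: this is the
law of a row of a `gaussMat`. -/
abbrev gaussianVec (ι : Type*) [Fintype ι] (s : ℝ≥0) : Measure (ι → ℝ) :=
  Measure.pi fun _ ↦ gaussianReal 0 s

section GaussianVec

variable {ι : Type*} [Fintype ι] {s : ℝ≥0}

lemma hasGaussianLaw_gaussianVec : HasGaussianLaw (fun w : ι → ℝ ↦ w) (gaussianVec ι s) :=
  iIndepFun.hasGaussianLaw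
    (fun i ↦ ⟨by rw [(measurePreserving_eval _ i).map_eq]; infer_instance⟩)
    (iIndepFun_pi (X := fun _ x ↦ x) fun _ ↦ aemeasurable_id)

lemma hasGaussianLaw_dotProduct_prodMk (u v : ι → ℝ) :
    HasGaussianLaw (fun w ↦ (w ⬝ᵥ u, w ⬝ᵥ v)) (gaussianVec ι s) := by
  let dotCLM (u : ι → ℝ) : (ι → ℝ) →L[ℝ] ℝ := ∑ i, u i • ContinuousLinearMap.proj i
  have hdot (u w : ι → ℝ) : dotCLM u w = w ⬝ᵥ u := by
    simp [dotCLM, dotProduct, mul_comm]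
  simpa [hdot] using hasGaussianLaw_gaussianVec.map_fun ((dotCLM u).prod (dotCLM v))

lemma odd_dotProduct (u : ι → ℝ) : (fun w ↦ w ⬝ᵥ u : (ι → ℝ) → ℝ).Odd :=
  fun w ↦ neg_dotProduct w u

lemma integral_dotProduct (u : ι → ℝ) : ∫ w, w ⬝ᵥ u ∂(gaussianVec ι s) = 0 :=
  integral_eq_zero_of_odd (odd_dotProduct u)

lemma variance_dotProduct (u : ι → ℝ) :
    Var[fun w ↦ w ⬝ᵥ u; gaussianVec ι s] = s * (u ⬝ᵥ u) := by
  have hsum : (fun w : ι → ℝ ↦ w ⬝ᵥ u) = ∑ i, fun w ↦ u i * w i := by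
    ext w
    simp [dotProduct, mul_comm]
  rw [hsum, variance_sum_pi (X := fun i x ↦ u i * x) fun i ↦
    (memLp_id_gaussianReal' (μ := 0) (v := s) 2 (by simp)).const_mul (u i), dotProduct,
    Finset.mul_sum]
  refine Finset.sum_congr rfl fun i _ ↦ ?_
  rw [variance_const_mul, variance_fun_id_gaussianReal]
  ring

lemma hasLaw_dotProduct (u : ι → ℝ) :
    HasLaw (fun w ↦ w ⬝ᵥ u) (gaussianReal 0 (s * (u ⬝ᵥ u).toNNReal)) (gaussianVec ι s) := by
  have h := hasLaw_gaussianReal_of_integral_eq_zero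
    (hasGaussianLaw_dotProduct_prodMk (s := s) u u).fst (integral_dotProduct u)
  rwa [variance_dotProduct, Real.toNNReal_mul s.coe_nonneg, Real.toNNReal_coe] at h

lemma integral_dotProduct_sq (u : ι → ℝ) :
    ∫ w, (w ⬝ᵥ u) ^ 2 ∂(gaussianVec ι s) = s * (u ⬝ᵥ u) := by
  rw [← variance_dotProduct,
    variance_of_integral_eq_zero (by fun_prop) (integral_dotProduct u)]

lemma memLp_dotProduct (u : ι → ℝ) : MemLp (fun w ↦ w ⬝ᵥ u) 2 (gaussianVec ι s) :=
  (hasGaussianLaw_dotProduct_prodMk u u).fst.memLp_two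

lemma integral_dotProduct_pow_four (u : ι → ℝ) :
    ∫ w, (w ⬝ᵥ u) ^ 4 ∂(gaussianVec ι s) = 3 * (s * (u ⬝ᵥ u)) ^ 2 := by
  have := (hasLaw_dotProduct (s := s) u).integral_comp (f := fun x ↦ x ^ 4) (by fun_prop)
  simpa [integral_pow_four_gaussianReal, Function.comp_def,
    dotProduct_self_nonneg u] using this

lemma integral_negPart_dotProduct_mul_le (u v : ι → ℝ) :
    ∫ w, ((w ⬝ᵥ u) * (w ⬝ᵥ v))⁻ ∂(gaussianVec ι s) ≤ s * ((u - v) ⬝ᵥ (u - v)) / 4 := by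
  rw [← integral_dotProduct_sq, ← integral_div]
  refine integral_mono_of_nonneg (.of_forall fun w ↦ negPart_nonneg _)
    ((memLp_dotProduct _).integrable_sq.div_const 4) (.of_forall fun w ↦ ?_)
  simpa only [dotProduct_sub] using negPart_mul_le (w ⬝ᵥ u) (w ⬝ᵥ v)

lemma sqrt_mul_integral_negPart_dotProduct_mul_le (hs : s ≠ 0) (u v : ι → ℝ) :
    √(u ⬝ᵥ u) * ∫ w, ((w ⬝ᵥ u) * (w ⬝ᵥ v))⁻ ∂(gaussianVec ι s) ≤
      2 * s * √((u - v) ⬝ᵥ (u - v)) ^ 3 := by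
  have h := sqrt_variance_mul_integral_negPart_mul_le
    (hasGaussianLaw_dotProduct_prodMk (s := s) u v) (integral_dotProduct u) (integral_dotProduct v)
  simp only [← dotProduct_sub, variance_dotProduct, Real.sqrt_mul s.coe_nonneg] at h
  have hsqrt : 0 < √(s : ℝ) := by positivity
  refine le_of_mul_le_mul_left ?_ hsqrt
  calc √s * (√(u ⬝ᵥ u) * ∫ w, ((w ⬝ᵥ u) * (w ⬝ᵥ v))⁻ ∂(gaussianVec ι s))
      ≤ 2 * (√s * √((u - v) ⬝ᵥ (u - v))) ^ 3 := by rwa [← mul_assoc]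
    _ = √s * (2 * √s ^ 2 * √((u - v) ⬝ᵥ (u - v)) ^ 3) := by ring
    _ = √s * (2 * s * √((u - v) ⬝ᵥ (u - v)) ^ 3) := by rw [Real.sq_sqrt s.coe_nonneg]

end GaussianVec

/-! ### Chernoff bounds -/

section Chernoff

variable {ι Ω : Type*} [Fintype ι] [MeasurableSpace Ω] {ν : Measure Ω} [IsProbabilityMeasure ν]
  {f : Ω → ℝ}

lemma measureReal_pi_le_sum_le_exp_mul_mgf_pow (hf : Measurable f) {θ : ℝ} (hθ : 0 ≤ θ)
    (hint : Integrable (fun ω ↦ Real.exp (θ * f ω)) ν) (r : ℝ) :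
    (Measure.pi fun _ : ι ↦ ν).real {M | r ≤ ∑ k, f (M k)} ≤
      Real.exp (-θ * r) * mgf f ν θ ^ Fintype.card ι := by
  have hindep : iIndepFun (fun (k : ι) (M : ι → Ω) ↦ f (M k)) (Measure.pi fun _ ↦ ν) :=
    iIndepFun_pi fun _ ↦ hf.aemeasurable
  have heval (k : ι) : MeasurePreserving (fun M : ι → Ω ↦ M k) (Measure.pi fun _ ↦ ν) ν :=
    measurePreserving_eval _ k
  have hmeas (k : ι) : Measurable fun M : ι → Ω ↦ f (M k) := by fun_prop
  have hmgf (k : ι) : mgf (fun M : ι → Ω ↦ f (M k)) (Measure.pi fun _ ↦ ν) θ = mgf f ν θ := by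
    refine (mgf_map (heval k).aemeasurable (by fun_prop)).symm.trans ?_
    rw [(heval k).map_eq]
  have hsum := hindep.integrable_exp_mul_sum (s := Finset.univ) (t := θ) hmeas
    fun k _ ↦ (heval k).integrable_comp_of_integrable hint
  have h := measure_ge_le_exp_mul_mgf r hθ hsum
  rw [hindep.mgf_sum hmeas, Finset.prod_congr rfl fun k _ ↦ hmgf k] at h
  simpa using h

lemma measureReal_pi_le_sum_le_exp (hf : Measurable f) {a c t : ℝ} (hc : 0 < c) (ht : 0 ≤ t)
    (hint : Integrable (fun ω ↦ Real.exp (t / (2 * c) * f ω)) ν)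
    (hmgf : mgf f ν (t / (2 * c)) ≤ Real.exp (t / (2 * c) * a + (t / (2 * c)) ^ 2 * c)) :
    (Measure.pi fun _ : ι ↦ ν).real {M | Fintype.card ι * (a + t) ≤ ∑ k, f (M k)} ≤
      Real.exp (-(Fintype.card ι * (t ^ 2 / (4 * c)))) := by
  set θ := t / (2 * c)
  have hθ : 0 ≤ θ := by positivity
  calc (Measure.pi fun _ : ι ↦ ν).real {M | Fintype.card ι * (a + t) ≤ ∑ k, f (M k)}
      ≤ Real.exp (-θ * (Fintype.card ι * (a + t))) * mgf f ν θ ^ Fintype.card ι :=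
        measureReal_pi_le_sum_le_exp_mul_mgf_pow hf hθ hint _
    _ ≤ Real.exp (-θ * (Fintype.card ι * (a + t))) *
          Real.exp (θ * a + θ ^ 2 * c) ^ Fintype.card ι := by
        gcongr
        exact mgf_nonneg
    _ = Real.exp (-(Fintype.card ι * (t ^ 2 / (4 * c)))) := by
        rw [← Real.exp_nat_mul, ← Real.exp_add]
        congr 1
        simp only [θ]
        field_simp
        ring

lemma measureReal_pi_le_abs_sum_sub_le_exp (hf : Measurable f) {a c t : ℝ} (hc : 0 < c)
    (ht : 0 ≤ t)
    (hint : ∀ θ, |θ| = t / (2 * c) → Integrable (fun ω ↦ Real.exp (θ * f ω)) ν)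
    (hmgf : ∀ θ, |θ| = t / (2 * c) → mgf f ν θ ≤ Real.exp (θ * a + θ ^ 2 * c)) :
    (Measure.pi fun _ : ι ↦ ν).real
        {M | Fintype.card ι * t ≤ |∑ k, f (M k) - Fintype.card ι * a|} ≤
      2 * Real.exp (-(Fintype.card ι * (t ^ 2 / (4 * c)))) := by
  have hpos : |t / (2 * c)| = t / (2 * c) := abs_of_nonneg (by positivity)
  have hneg : |-(t / (2 * c))| = t / (2 * c) := by rw [abs_neg, hpos]
  have hupper := measureReal_pi_le_sum_le_exp (ι := ι) hf hc ht (hint _ hpos) (hmgf _ hpos)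
  have hlower := measureReal_pi_le_sum_le_exp (ι := ι) (f := -f) (a := -a) hf.neg hc ht
    (by simpa using hint _ hneg)
    (by rw [mgf_neg]; simpa using hmgf _ hneg)
  set S : Set (ι → Ω) := {M | Fintype.card ι * (a + t) ≤ ∑ k, f (M k)}
  set T : Set (ι → Ω) := {M | Fintype.card ι * (-a + t) ≤ ∑ k, (-f) (M k)}
  calc _ ≤ (Measure.pi fun _ : ι ↦ ν).real (S ∪ T) := by
        refine measureReal_mono fun M hM ↦ ?_
        simp only [S, T, Set.mem_union, Set.mem_ofPred_eq, le_abs, Pi.neg_apply,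
          Finset.sum_neg_distrib] at hM ⊢
        refine hM.imp (fun h ↦ ?_) fun h ↦ ?_ <;> linarith
    _ ≤ (Measure.pi fun _ : ι ↦ ν).real S + (Measure.pi fun _ : ι ↦ ν).real T :=
        measureReal_union_le _ _
    _ ≤ _ := by linarith

end Chernoff

/-! ### One layer -/

section RowMoments

variable {ι : Type*} [Fintype ι] {s : ℝ≥0}

lemma coe_mul_toNNReal_dotProduct_self (u : ι → ℝ) :
    ((s * (u ⬝ᵥ u).toNNReal : ℝ≥0) : ℝ) = s * (u ⬝ᵥ u) := by
  rw [NNReal.coe_mul, Real.coe_toNNReal _ (dotProduct_self_nonneg u)]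

lemma integrable_exp_mul_posPart_dotProduct_sq {u : ι → ℝ} {θ : ℝ}
    (h : 2 * (θ * (s * (u ⬝ᵥ u))) < 1) :
    Integrable (fun w ↦ Real.exp (θ * (w ⬝ᵥ u)⁺ ^ 2)) (gaussianVec ι s) := by
  rw [← coe_mul_toNNReal_dotProduct_self] at h
  have hlaw := hasLaw_dotProduct (s := s) u
  exact (hlaw.map_eq ▸ integrable_exp_mul_sq_posPart_gaussianReal h).comp_aemeasurable
    hlaw.aemeasurable

lemma mgf_posPart_dotProduct_sq_le {u : ι → ℝ} {θ : ℝ} (h : |θ * (s * (u ⬝ᵥ u))| ≤ 1 / 4) :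
    mgf (fun w ↦ (w ⬝ᵥ u)⁺ ^ 2) (gaussianVec ι s) θ ≤
      Real.exp (θ * (s * (u ⬝ᵥ u) / 2) + θ ^ 2 * (2 * (s * (u ⬝ᵥ u)) ^ 2)) := by
  rw [← coe_mul_toNNReal_dotProduct_self] at h ⊢
  refine Eq.trans_le ?_ (mgf_sq_posPart_gaussianReal_le h)
  exact (hasLaw_dotProduct u).integral_comp (f := fun x ↦ Real.exp (θ * x⁺ ^ 2)) (by fun_prop)

lemma integral_posPart_dotProduct_sub_sq (u v : ι → ℝ) :
    ∫ w, ((w ⬝ᵥ u)⁺ - (w ⬝ᵥ v)⁺) ^ 2 ∂(gaussianVec ι s) =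
      s * ((u - v) ⬝ᵥ (u - v)) / 2 - ∫ w, ((w ⬝ᵥ u) * (w ⬝ᵥ v))⁻ ∂(gaussianVec ι s) := by
  rw [integral_posPart_sub_posPart_sq (memLp_dotProduct u) (memLp_dotProduct v)
    (odd_dotProduct u) (odd_dotProduct v)]
  simp only [← dotProduct_sub, integral_dotProduct_sq]

lemma integrable_dotProduct_pow (u : ι → ℝ) (k : ℕ) :
    Integrable (fun w ↦ (w ⬝ᵥ u) ^ k) (gaussianVec ι s) := by
  have hlaw := hasLaw_dotProduct (s := s) u
  exact (hlaw.map_eq ▸ integrable_pow_gaussianReal _ k).comp_aemeasurable hlaw.aemeasurable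

lemma posPart_dotProduct_sub_pow_four_le (u v w : ι → ℝ) :
    (((w ⬝ᵥ u)⁺ - (w ⬝ᵥ v)⁺) ^ 2) ^ 2 ≤ (w ⬝ᵥ (u - v)) ^ 4 := by
  rw [dotProduct_sub, show 4 = 2 * 2 from rfl, pow_mul]
  exact pow_le_pow_left₀ (sq_nonneg _) (posPart_sub_posPart_sq_le _ _) 2

lemma memLp_posPart_dotProduct_sub_sq (u v : ι → ℝ) :
    MemLp (fun w ↦ ((w ⬝ᵥ u)⁺ - (w ⬝ᵥ v)⁺) ^ 2) 2 (gaussianVec ι s) := by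
  refine (memLp_two_iff_integrable_sq (by fun_prop)).2 ?_
  refine (integrable_dotProduct_pow (u - v) 4).mono' (by fun_prop) (.of_forall fun w ↦ ?_)
  rw [Real.norm_of_nonneg (sq_nonneg _)]
  exact posPart_dotProduct_sub_pow_four_le u v w

lemma integral_posPart_dotProduct_sub_pow_four_le (u v : ι → ℝ) :
    ∫ w, (((w ⬝ᵥ u)⁺ - (w ⬝ᵥ v)⁺) ^ 2) ^ 2 ∂(gaussianVec ι s) ≤
      3 * (s * ((u - v) ⬝ᵥ (u - v))) ^ 2 :=
  (integral_mono_of_nonneg (.of_forall fun _ ↦ sq_nonneg _) (integrable_dotProduct_pow _ 4)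
    (.of_forall (posPart_dotProduct_sub_pow_four_le u v))).trans_eq (integral_dotProduct_pow_four _)

lemma integrable_exp_neg_posPart_dotProduct_sub_sq (u v : ι → ℝ) {θ : ℝ} (hθ : 0 ≤ θ) :
    Integrable (fun w ↦ Real.exp (θ * -((w ⬝ᵥ u)⁺ - (w ⬝ᵥ v)⁺) ^ 2)) (gaussianVec ι s) := by
  refine Integrable.of_bound (by fun_prop) 1 (.of_forall fun w ↦ ?_)
  rw [Real.norm_of_nonneg (Real.exp_pos _).le, Real.exp_le_one_iff]
  exact mul_nonpos_of_nonneg_of_nonpos hθ (neg_nonpos.2 (sq_nonneg _))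

lemma mgf_neg_posPart_dotProduct_sub_sq_le {u v : ι → ℝ} {θ R : ℝ} (hθ : 0 ≤ θ)
    (hR : (u - v) ⬝ᵥ (u - v) ≤ R) :
    mgf (fun w ↦ -((w ⬝ᵥ u)⁺ - (w ⬝ᵥ v)⁺) ^ 2) (gaussianVec ι s) θ ≤
      Real.exp (θ * -(s * ((u - v) ⬝ᵥ (u - v)) / 2 -
        ∫ w, ((w ⬝ᵥ u) * (w ⬝ᵥ v))⁻ ∂(gaussianVec ι s)) + θ ^ 2 * (3 / 2 * (s * R) ^ 2)) := by
  have hsq : ∫ w, (((w ⬝ᵥ u)⁺ - (w ⬝ᵥ v)⁺) ^ 2) ^ 2 ∂(gaussianVec ι s) ≤ 3 * (s * R) ^ 2 := by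
    have := dotProduct_self_nonneg (u - v)
    exact (integral_posPart_dotProduct_sub_pow_four_le u v).trans (by gcongr)
  refine mgf_neg.trans_le <| (mgf_neg_le_exp_of_nonneg
    (memLp_posPart_dotProduct_sub_sq u v) (fun _ ↦ sq_nonneg _) hθ).trans (Real.exp_le_exp.2 ?_)
  rw [integral_posPart_dotProduct_sub_sq]
  linarith [mul_le_mul_of_nonneg_left hsq (sq_nonneg θ)]

end RowMoments

section Layer

variable {q : ℕ}

instance isProbabilityMeasure_gaussMat (p q : ℕ) (v : ℝ≥0) :
    IsProbabilityMeasure (gaussMat p q v) :=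
  inferInstanceAs (IsProbabilityMeasure (Measure.pi fun _ : Fin p ↦ gaussianVec (Fin q) v))

lemma relu_mulVec_dotProduct_self (M : Fin m → Fin q → ℝ) (u : Fin q → ℝ) :
    relu (mulVec M u) ⬝ᵥ relu (mulVec M u) = ∑ k, (M k ⬝ᵥ u)⁺ ^ 2 :=
  Finset.sum_congr rfl fun _ _ ↦ (sq _).symm

lemma relu_mulVec_sub_dotProduct_self (M : Fin m → Fin q → ℝ) (u v : Fin q → ℝ) :
    (relu (mulVec M u) - relu (mulVec M v)) ⬝ᵥ (relu (mulVec M u) - relu (mulVec M v)) =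
      ∑ k, ((M k ⬝ᵥ u)⁺ - (M k ⬝ᵥ v)⁺) ^ 2 :=
  Finset.sum_congr rfl fun _ _ ↦ (sq _).symm

lemma gaussMat_le_abs_relu_mulVec_sub_le (hm : 0 < m) {u : Fin q → ℝ} (hu : 0 < u ⬝ᵥ u) {τ : ℝ}
    (hτ0 : 0 ≤ τ) (hτ : τ ≤ 2 * (u ⬝ᵥ u)) :
    (gaussMat m q (2 / m)).real
        {M | τ ≤ |relu (mulVec M u) ⬝ᵥ relu (mulVec M u) - u ⬝ᵥ u|} ≤
      2 * Real.exp (-(τ ^ 2 * m / (32 * (u ⬝ᵥ u) ^ 2))) := by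
  have hm' : (m : ℝ) ≠ 0 := by positivity
  set N := u ⬝ᵥ u
  have hsmall (θ : ℝ) (hθ : |θ| = τ / m / (2 * (2 * (2 / m * N) ^ 2))) :
      |θ * (((2 / m : ℝ≥0) : ℝ) * N)| ≤ 1 / 4 := by
    have : |θ * (2 / m * N)| = τ / (8 * N) := by
      rw [abs_mul, hθ, abs_of_pos (by positivity : 0 < 2 / m * N)]
      field_simp
      ring
    push_cast
    rw [this, div_le_iff₀ (by positivity)]
    linarith
  have h := measureReal_pi_le_abs_sum_sub_le_exp (ι := Fin m)
    (ν := gaussianVec (Fin q) (2 / m)) (f := fun w ↦ (w ⬝ᵥ u)⁺ ^ 2) (a := 2 / m * N / 2)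
    (c := 2 * (2 / m * N) ^ 2) (t := τ / m) (by fun_prop) (by positivity) (by positivity)
    (fun θ hθ ↦ integrable_exp_mul_posPart_dotProduct_sq (by
      linarith [le_abs_self (θ * (((2 / m : ℝ≥0) : ℝ) * N)), hsmall θ hθ]))
    (fun θ hθ ↦ by simpa using mgf_posPart_dotProduct_sq_le (hsmall θ hθ))
  have hN : (m : ℝ) * (2 / m * N / 2) = N := by field_simp
  have hτm : (m : ℝ) * (τ / m) = τ := by field_simp
  simp only [Fintype.card_fin, hN, hτm] at h
  simp only [relu_mulVec_dotProduct_self]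
  refine h.trans_eq ?_
  congr 3
  field_simp
  ring

lemma gaussMat_relu_mulVec_sub_le_le (hm : 0 < m) (u v : Fin q → ℝ) {R τ : ℝ} (hR : 0 < R)
    (hD : (u - v) ⬝ᵥ (u - v) ≤ R) (hτ : 0 ≤ τ) :
    (gaussMat m q (2 / m)).real
        {M | (relu (mulVec M u) - relu (mulVec M v)) ⬝ᵥ (relu (mulVec M u) - relu (mulVec M v)) ≤
          (u - v) ⬝ᵥ (u - v) -
            m * ∫ w, ((w ⬝ᵥ u) * (w ⬝ᵥ v))⁻ ∂(gaussianVec (Fin q) (2 / m)) - τ} ≤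
      Real.exp (-(τ ^ 2 * m / (24 * R ^ 2))) := by
  set D := (u - v) ⬝ᵥ (u - v)
  set E := ∫ w, ((w ⬝ᵥ u) * (w ⬝ᵥ v))⁻ ∂(gaussianVec (Fin q) (2 / m))
  have hc : 0 < 3 / 2 * (((2 / m : ℝ≥0) : ℝ) * R) ^ 2 := by positivity
  have hθ : 0 ≤ τ / m / (2 * (3 / 2 * (((2 / m : ℝ≥0) : ℝ) * R) ^ 2)) := by positivity
  have h := measureReal_pi_le_sum_le_exp (ι := Fin m) (by fun_prop) hc (by positivity)
    (integrable_exp_neg_posPart_dotProduct_sub_sq u v hθ)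
    (mgf_neg_posPart_dotProduct_sub_sq_le hθ hD)
  have hthreshold : (m : ℝ) * (-(2 / m * D / 2 - E) + τ / m) = -(D - m * E - τ) := by
    field_simp
    ring
  push_cast at h
  simp only [Fintype.card_fin, Finset.sum_neg_distrib, D, E, hthreshold, neg_le_neg_iff] at h
  simp only [relu_mulVec_sub_dotProduct_self]
  refine h.trans_eq ?_
  congr 2
  field_simp
  ring

/-- `IsSpread δ η u v`: after an accumulated error `η`, the vectors `u`, `v` still have nearly unit
norm and their squared distance is still nearly `δ ^ 2`. This is the invariant carried through the
layers, each of which increases `η` by `δ ^ 3`. The factor `17` pays, per layer, for a cross loss of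
at most `16 * δ ^ 3` and a fluctuation of `δ ^ 3`. -/
def IsSpread {ι : Type*} [Fintype ι] (δ η : ℝ) (u v : ι → ℝ) : Prop :=
  |u ⬝ᵥ u - 1| ≤ η ∧ |v ⬝ᵥ v - 1| ≤ η ∧ δ ^ 2 - 17 * η ≤ (u - v) ⬝ᵥ (u - v)

lemma mul_integral_negPart_dotProduct_mul_le (hm : 0 < m) (u v : Fin q → ℝ) :
    m * ∫ w, ((w ⬝ᵥ u) * (w ⬝ᵥ v))⁻ ∂(gaussianVec (Fin q) (2 / m)) ≤
      (u - v) ⬝ᵥ (u - v) / 2 := by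
  refine (mul_le_mul_of_nonneg_left (integral_negPart_dotProduct_mul_le u v)
    m.cast_nonneg).trans_eq ?_
  push_cast
  field_simp
  ring

lemma mul_integral_negPart_dotProduct_mul_le_pow_three (hm : 0 < m) {u v : Fin q → ℝ} {δ : ℝ}
    (hδ : 0 ≤ δ) (hu : 1 / 2 ≤ u ⬝ᵥ u) (hD : (u - v) ⬝ᵥ (u - v) ≤ 2 * δ ^ 2) :
    m * ∫ w, ((w ⬝ᵥ u) * (w ⬝ᵥ v))⁻ ∂(gaussianVec (Fin q) (2 / m)) ≤ 16 * δ ^ 3 := by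
  set E := ∫ w, ((w ⬝ᵥ u) * (w ⬝ᵥ v))⁻ ∂(gaussianVec (Fin q) (2 / m))
  have : 0 ≤ E := integral_nonneg fun w ↦ negPart_nonneg _
  have hsqrtD : √((u - v) ⬝ᵥ (u - v)) ≤ √2 * δ := by
    simpa [Real.sqrt_sq hδ] using Real.sqrt_le_sqrt hD
  have hsqrtu : √2 / 2 ≤ √(u ⬝ᵥ u) := by
    rw [Real.le_sqrt (by positivity) (by linarith), div_pow, Real.sq_sqrt zero_le_two]
    linarith
  have hcubic : √2 / 2 * E ≤ 2 * (2 / m) * (√2 * δ) ^ 3 := by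
    calc √2 / 2 * E ≤ √(u ⬝ᵥ u) * E := by gcongr
      _ ≤ 2 * ((2 / m : ℝ≥0) : ℝ) * √((u - v) ⬝ᵥ (u - v)) ^ 3 :=
          sqrt_mul_integral_negPart_dotProduct_mul_le (by positivity) u v
      _ ≤ 2 * (2 / m) * (√2 * δ) ^ 3 := by
          push_cast
          gcongr
  calc m * E = √2 * m * (√2 / 2 * E) := by
        linear_combination (-(m * E) / 2) * Real.sq_sqrt zero_le_two
    _ ≤ √2 * m * (2 * (2 / m) * (√2 * δ) ^ 3) := by gcongr
    _ = 4 * (√2 ^ 2) ^ 2 * δ ^ 3 := by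
        field_simp
        ring
    _ = 16 * δ ^ 3 := by
        rw [Real.sq_sqrt zero_le_two]
        norm_num

lemma gaussMat_pow_three_le_abs_relu_mulVec_sub_le (hm : 0 < m) {u : Fin q → ℝ} {δ : ℝ}
    (hu : |u ⬝ᵥ u - 1| ≤ 1 / 2) (hδ : 0 ≤ δ) (hδ1 : δ ≤ 1) :
    (gaussMat m q (2 / m)).real
        {M | δ ^ 3 ≤ |relu (mulVec M u) ⬝ᵥ relu (mulVec M u) - u ⬝ᵥ u|} ≤
      2 * Real.exp (-(δ ^ 6 * m / 864)) := by
  obtain ⟨hu1, hu2⟩ := abs_le.1 hu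
  have hu0 : 0 < u ⬝ᵥ u := by linarith
  have hδ3 : δ ^ 3 ≤ 1 := pow_le_one₀ hδ hδ1
  -- `864 = 24 * 6 ^ 2` is the rate in `gaussMat_relu_mulVec_sub_le_le` when `‖u - v‖² ≤ 6`
  have hsq : 32 * (u ⬝ᵥ u) ^ 2 ≤ 864 := by nlinarith
  refine (gaussMat_le_abs_relu_mulVec_sub_le hm hu0 (by positivity) (by linarith)).trans ?_
  rw [← pow_mul]
  gcongr

namespace IsSpread

variable {δ η : ℝ} {u v : Fin q → ℝ}

lemma sub_le_sub_mul_integral_negPart (hm : 0 < m) (h : IsSpread δ η u v)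
    (hη : η ≤ 1 / 2) (hδ : 0 ≤ δ) :
    δ ^ 2 - 17 * (η + δ ^ 3) ≤ (u - v) ⬝ᵥ (u - v) -
      m * ∫ w, ((w ⬝ᵥ u) * (w ⬝ᵥ v))⁻ ∂(gaussianVec (Fin q) (2 / m)) - δ ^ 3 := by
  obtain ⟨hu, -, hD⟩ := h
  have hη0 : 0 ≤ η := (abs_nonneg _).trans hu
  have hδ3 : 0 ≤ δ ^ 3 := by positivity
  rcases le_total ((u - v) ⬝ᵥ (u - v)) (2 * δ ^ 2) with hclose | hfar
  · have := mul_integral_negPart_dotProduct_mul_le_pow_three hm hδ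
      (by linarith [(abs_le.1 hu).1]) hclose
    linarith
  · linarith [mul_integral_negPart_dotProduct_mul_le hm u v]

lemma gaussMat_not_relu_mulVec_le (hm : 0 < m) (h : IsSpread δ η u v)
    (hη : η ≤ 1 / 2) (hδ : 0 ≤ δ) (hδ1 : δ ≤ 1) :
    (gaussMat m q (2 / m)).real
        {M | ¬ IsSpread δ (η + δ ^ 3) (relu (mulVec M u)) (relu (mulVec M v))} ≤
      5 * Real.exp (-(δ ^ 6 * m / 864)) := by
  set μ := gaussMat m q (2 / m)
  let normBad (w : Fin q → ℝ) : Set (Fin m → Fin q → ℝ) :=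
    {M | δ ^ 3 ≤ |relu (mulVec M w) ⬝ᵥ relu (mulVec M w) - w ⬝ᵥ w|}
  let distBad : Set (Fin m → Fin q → ℝ) :=
    {M | (relu (mulVec M u) - relu (mulVec M v)) ⬝ᵥ (relu (mulVec M u) - relu (mulVec M v)) ≤
      (u - v) ⬝ᵥ (u - v) -
        m * ∫ w, ((w ⬝ᵥ u) * (w ⬝ᵥ v))⁻ ∂(gaussianVec (Fin q) (2 / m)) - δ ^ 3}
  have hnorm {w : Fin q → ℝ} (hw : |w ⬝ᵥ w - 1| ≤ η) :
      μ.real (normBad w) ≤ 2 * Real.exp (-(δ ^ 6 * m / 864)) :=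
    gaussMat_pow_three_le_abs_relu_mulVec_sub_le hm (hw.trans hη) hδ hδ1
  have hdist : μ.real distBad ≤ Real.exp (-(δ ^ 6 * m / 864)) := by
    have hD : (u - v) ⬝ᵥ (u - v) ≤ 6 := by
      linarith [dotProduct_sub_sub_self_le u v, (abs_le.1 h.1).2, (abs_le.1 h.2.1).2]
    refine (gaussMat_relu_mulVec_sub_le_le hm u v (by norm_num) hD (by positivity)).trans_eq ?_
    norm_num [← pow_mul]
  have hcover : {M | ¬ IsSpread δ (η + δ ^ 3) (relu (mulVec M u)) (relu (mulVec M v))} ⊆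
      normBad u ∪ normBad v ∪ distBad := by
    intro M hM
    by_contra hgood
    simp only [normBad, distBad, Set.mem_union, Set.mem_ofPred_eq, not_or, not_le] at hgood
    obtain ⟨⟨hu, hv⟩, hd⟩ := hgood
    refine hM ⟨?_, ?_, (h.sub_le_sub_mul_integral_negPart hm hη hδ).trans hd.le⟩
    · linarith [abs_sub_le (relu (mulVec M u) ⬝ᵥ relu (mulVec M u)) (u ⬝ᵥ u) 1, h.1]
    · linarith [abs_sub_le (relu (mulVec M v) ⬝ᵥ relu (mulVec M v)) (v ⬝ᵥ v) 1, h.2.1]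
  calc μ.real _ ≤ μ.real (normBad u ∪ normBad v ∪ distBad) := measureReal_mono hcover
    _ ≤ μ.real (normBad u) + μ.real (normBad v) + μ.real distBad :=
        (measureReal_union_le _ _).trans (by gcongr; exact measureReal_union_le _ _)
    _ ≤ 5 * Real.exp (-(δ ^ 6 * m / 864)) := by linarith [hnorm h.1, hnorm h.2.1]

end IsSpread
end Layer

/-! ### From spread to the residual -/

section Residual

variable {p : ℕ} {δ η : ℝ} {u v : Fin p → ℝ}

lemma l2_eq_sqrt_dotProduct_self (v : Fin p → ℝ) : l2 v = √(v ⬝ᵥ v) := by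
  simp only [l2, dotProduct, sq]

lemma l2_sq (v : Fin p → ℝ) : l2 v ^ 2 = v ⬝ᵥ v := by
  rw [l2_eq_sqrt_dotProduct_self, Real.sq_sqrt (dotProduct_self_nonneg v)]

lemma IsSpread.half_le_l2_residual (h : IsSpread δ η u v) (huv : 0 ≤ u ⬝ᵥ v) (hδ1 : δ ≤ 1)
    (hδ : 0 ≤ δ) (hη : η ≤ δ ^ 2 / 100) :
    δ / 2 ≤ l2 (fun k ↦ v k - (dot u v / l2 u ^ 2) * u k) := by
  obtain ⟨hu, hv, hD⟩ := h
  obtain ⟨hu1, hu2⟩ := abs_le.1 (hu.trans hη)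
  obtain ⟨hv1, hv2⟩ := abs_le.1 (hv.trans hη)
  have hδ2 : δ ^ 2 ≤ 1 := pow_le_one₀ hδ hδ1
  have hu0 : 0 < u ⬝ᵥ u := by linarith
  have hresidual : (fun k ↦ v k - (dot u v / l2 u ^ 2) * u k) =
      v - (u ⬝ᵥ v / u ⬝ᵥ u) • u := by
    rw [l2_sq]
    rfl
  rw [hresidual, l2_eq_sqrt_dotProduct_self, dotProduct_sub_div_smul_self hu0.ne']
  refine Real.le_sqrt_of_sq_le ?_
  have hnorms : (u ⬝ᵥ u - v ⬝ᵥ v) ^ 2 ≤ δ ^ 2 / 2500 := by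
    calc (u ⬝ᵥ u - v ⬝ᵥ v) ^ 2 ≤ (δ ^ 2 / 50) ^ 2 := sq_le_sq' (by linarith) (by linarith)
      _ ≤ δ ^ 2 / 2500 := by nlinarith [sq_nonneg δ]
  have hdist : 83 / 100 * δ ^ 2 * (198 / 100) ≤
      (u - v) ⬝ᵥ (u - v) * (u ⬝ᵥ u + v ⬝ᵥ v) := by
    gcongr <;> linarith
  have hgram : (δ / 2) ^ 2 * u ⬝ᵥ u ≤ u ⬝ᵥ u * v ⬝ᵥ v - (u ⬝ᵥ v) ^ 2 := by
    have hN : δ ^ 2 * u ⬝ᵥ u ≤ δ ^ 2 * (101 / 100) := by gcongr; linarith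
    linarith [dotProduct_sub_mul_add_le huv]
  calc (δ / 2) ^ 2 ≤ (u ⬝ᵥ u * v ⬝ᵥ v - (u ⬝ᵥ v) ^ 2) / u ⬝ᵥ u := (le_div_iff₀ hu0).2 hgram
    _ = v ⬝ᵥ v - (u ⬝ᵥ v) ^ 2 / u ⬝ᵥ u := by field_simp

end Residual

/-! ### Combining failure probabilities -/

section Probability

lemma measure_prod_le_of_forall_section {α β : Type*} [MeasurableSpace α] [MeasurableSpace β]
    {μ : Measure α} {ν : Measure β} [IsProbabilityMeasure μ] [SFinite ν] {S : Set (α × β)}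
    (hS : MeasurableSet S) {p : ENNReal} (h : ∀ a, ν (Prod.mk a ⁻¹' S) ≤ p) :
    μ.prod ν S ≤ p := by
  rw [Measure.prod_apply hS]
  exact (lintegral_mono h).trans (by simp)

lemma measure_pi_le_of_forall_update {ι : Type*} [Fintype ι] [DecidableEq ι] {X : ι → Type*}
    [∀ i, MeasurableSpace (X i)] {μ : ∀ i, Measure (X i)} [∀ i, IsProbabilityMeasure (μ i)]
    (k : ι) {S : Set (∀ i, X i)} (hS : MeasurableSet S) {p : ENNReal}
    (h : ∀ w, μ k (Function.update w k ⁻¹' S) ≤ p) : Measure.pi μ S ≤ p := by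
  have hmarginal : ∫⋯∫⁻_{k}, S.indicator 1 ∂μ ≤ ∫⋯∫⁻_{k}, (fun _ ↦ p) ∂μ := by
    rw [lmarginal_singleton, lmarginal_singleton]
    intro w
    change ∫⁻ y, (Function.update w k ⁻¹' S).indicator 1 y ∂(μ k) ≤ _
    rw [lintegral_indicator_one (measurable_update w hS)]
    simpa using h w
  simpa [lintegral_indicator_one hS] using
    lintegral_le_of_lmarginal_le {k} (measurable_one.indicator hS) measurable_const hmarginal

variable {Ω : Type*} [MeasurableSpace Ω] {μ : Measure Ω}

lemma measureReal_exists_not_le [IsFiniteMeasure μ] {P : ℕ → Ω → Prop} {p : ℝ} {n : ℕ}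
    (hzero : μ.real {ω | ¬ P 0 ω} ≤ p)
    (hsucc : ∀ ℓ < n, μ.real {ω | P ℓ ω ∧ ¬ P (ℓ + 1) ω} ≤ p) :
    μ.real {ω | ∃ ℓ ≤ n, ¬ P ℓ ω} ≤ (n + 1) * p := by
  induction n with
  | zero => simpa using hzero
  | succ n ih =>
    have hcover : {ω | ∃ ℓ ≤ n + 1, ¬ P ℓ ω} ⊆
        {ω | ∃ ℓ ≤ n, ¬ P ℓ ω} ∪ {ω | P n ω ∧ ¬ P (n + 1) ω} := by
      rintro ω ⟨ℓ, hℓ, hω⟩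
      rcases hℓ.lt_or_eq with hlt | rfl
      · exact Or.inl ⟨ℓ, Nat.lt_succ_iff.1 hlt, hω⟩
      · by_cases hL : P n ω
        · exact Or.inr ⟨hL, hω⟩
        · exact Or.inl ⟨n, le_rfl, hL⟩
    calc μ.real {ω | ∃ ℓ ≤ n + 1, ¬ P ℓ ω}
        ≤ μ.real {ω | ∃ ℓ ≤ n, ¬ P ℓ ω} + μ.real {ω | P n ω ∧ ¬ P (n + 1) ω} :=
          (measureReal_mono hcover).trans (measureReal_union_le _ _)
      _ ≤ (n + 1) * p + p :=
          add_le_add (ih fun ℓ hℓ ↦ hsucc ℓ (by lia)) (hsucc n (by lia))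
      _ = ((n + 1 : ℕ) + 1) * p := by push_cast; ring

lemma measureReal_exists_ne_le [IsFiniteMeasure μ] {ι : Type*} [Fintype ι]
    {P : ι → ι → Ω → Prop} {p : ℝ} (h : ∀ i j, i ≠ j → μ.real {ω | P i j ω} ≤ p) :
    μ.real {ω | ∃ i j, i ≠ j ∧ P i j ω} ≤
      Fintype.card ι * (Fintype.card ι - 1) * p := by
  classical
  have hunion : {ω | ∃ i j, i ≠ j ∧ P i j ω} =
      ⋃ a ∈ (Finset.univ : Finset ι).offDiag, {ω | P a.1 a.2 ω} := by
    ext ω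
    simp
  have hcard : (((Finset.univ : Finset ι).offDiag.card : ℕ) : ℝ) =
      Fintype.card ι * (Fintype.card ι - 1) := by
    rw [Finset.offDiag_card, Nat.cast_sub (Nat.le_mul_self _)]
    simp [mul_sub]
  rw [hunion, ← hcard, ← nsmul_eq_mul]
  exact (measureReal_biUnion_finset_le _ _).trans
    (Finset.sum_le_card_nsmul _ _ _ fun a ha ↦ h _ _ (by simpa using ha))

lemma ofReal_one_sub_le_of_compl_subset [IsProbabilityMeasure μ] {G B : Set Ω} {ε : ℝ}
    (hB : μ.real B ≤ ε) (hG : Bᶜ ⊆ G) : ENNReal.ofReal (1 - ε) ≤ μ G := by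
  refine ENNReal.ofReal_le_of_le_toReal ?_
  have hcover : G ∪ B = Set.univ := by
    rw [← Set.univ_subset_iff, ← Set.compl_union_self B]
    exact Set.union_subset_union_left B hG
  have := measureReal_union_le (μ := μ) G B
  rw [hcover, probReal_univ] at this
  rw [← measureReal_def]
  linarith

end Probability

/-! ### The random network -/

section Network

variable {A : Fin m → Fin 𝔡 → ℝ} {W : Fin L → Fin m → Fin m → ℝ} {x y : Fin 𝔡 → ℝ} {ℓ : ℕ}
  {δ η : ℝ}

lemma hseq_succ (h : ℓ < L) :
    hseq A W x (ℓ + 1) = relu (mulVec (W ⟨ℓ, h⟩) (hseq A W x ℓ)) := by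
  have h' : ℓ + 1 ≤ L := h
  simp [hseq, Wat, h']

lemma hseq_update {k : Fin L} (Y : Fin m → Fin m → ℝ) (h : ℓ ≤ k) :
    hseq A (Function.update W k Y) x ℓ = hseq A W x ℓ := by
  induction ℓ with
  | zero => rfl
  | succ ℓ ih =>
    have hℓ : ℓ < L := by lia
    rw [hseq_succ hℓ, hseq_succ hℓ, ih (by lia),
      Function.update_of_ne (Fin.ne_of_lt h)]

lemma relu_nonneg {p : ℕ} (v : Fin p → ℝ) : 0 ≤ relu v :=
  fun _ ↦ le_max_right _ _

lemma hseq_nonneg : 0 ≤ hseq A W x ℓ := by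
  induction ℓ with
  | zero => exact relu_nonneg _
  | succ ℓ ih =>
    rw [hseq]
    split_ifs
    exacts [relu_nonneg _, ih]

lemma measurable_relu_mulVec {α : Type*} [MeasurableSpace α] {p q : ℕ}
    {M : α → Fin p → Fin q → ℝ} {v : α → Fin q → ℝ} (hM : Measurable M) (hv : Measurable v) :
    Measurable fun a ↦ relu (mulVec (M a) (v a)) := by
  unfold relu mulVec
  fun_prop

lemma measurable_hseq (x : Fin 𝔡 → ℝ) (h : ℓ ≤ L) :
    Measurable fun z : (Fin m → Fin 𝔡 → ℝ) × (Fin L → Fin m → Fin m → ℝ) ↦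
      hseq z.1 z.2 x ℓ := by
  induction ℓ with
  | zero => exact measurable_relu_mulVec measurable_fst measurable_const
  | succ ℓ ih =>
    simp_rw [hseq_succ (show ℓ < L from h)]
    exact measurable_relu_mulVec (by fun_prop) (ih (by lia))

lemma measurableSet_isSpread {α : Type*} [MeasurableSpace α] {p : ℕ} {u v : α → Fin p → ℝ}
    (hu : Measurable u) (hv : Measurable v) : MeasurableSet {a | IsSpread δ η (u a) (v a)} := by
  have hdot {u v : α → Fin p → ℝ} (hu : Measurable u) (hv : Measurable v) :
      Measurable fun a ↦ u a ⬝ᵥ v a := by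
    unfold dotProduct
    fun_prop
  exact (measurableSet_le ((hdot hu hu).sub_const 1).abs measurable_const).inter
    ((measurableSet_le ((hdot hv hv).sub_const 1).abs measurable_const).inter
      (measurableSet_le measurable_const (hdot (hu.sub hv) (hu.sub hv))))

instance isProbabilityMeasure_initAW (𝔡 m L : ℕ) : IsProbabilityMeasure (initAW 𝔡 m L) := by
  unfold initAW
  infer_instance

lemma initAW_real_le_of_forall_update (k : Fin L)
    {S : Set ((Fin m → Fin 𝔡 → ℝ) × (Fin L → Fin m → Fin m → ℝ))} (hS : MeasurableSet S) {p : ℝ}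
    (hp : 0 ≤ p)
    (h : ∀ A W, (gaussMat m m (2 / m)).real {Y | (A, Function.update W k Y) ∈ S} ≤ p) :
    (initAW 𝔡 m L).real S ≤ p := by
  refine ENNReal.toReal_le_of_le_ofReal hp ?_
  refine measure_prod_le_of_forall_section hS fun A ↦ ?_
  refine measure_pi_le_of_forall_update k (measurable_prodMk_left hS) fun W ↦ ?_
  exact (ENNReal.le_ofReal_iff_toReal_le (measure_ne_top _ _) hp).2 (h A W)

lemma isSpread_zero_of_l2 (hx : l2 x = 1) (hy : l2 y = 1) (hδ : 0 ≤ δ) (hxy : δ ≤ l2 (x - y)) :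
    IsSpread δ 0 x y := by
  refine ⟨?_, ?_, ?_⟩
  · simp [← l2_sq, hx]
  · simp [← l2_sq, hy]
  · rw [← l2_sq]
    linarith [pow_le_pow_left₀ hδ hxy 2]

lemma initAW_not_isSpread_hseq_zero_le (hm : 0 < m) (h : IsSpread δ 0 x y) (hδ : 0 ≤ δ)
    (hδ1 : δ ≤ 1) :
    (initAW 𝔡 m L).real {z | ¬ IsSpread δ (δ ^ 3) (hseq z.1 z.2 x 0) (hseq z.1 z.2 y 0)} ≤
      5 * Real.exp (-(δ ^ 6 * m / 864)) := by
  have hinput := h.gaussMat_not_relu_mulVec_le hm (by norm_num) hδ hδ1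
  rw [zero_add] at hinput
  have hrect : {z : (Fin m → Fin 𝔡 → ℝ) × (Fin L → Fin m → Fin m → ℝ) |
        ¬ IsSpread δ (δ ^ 3) (hseq z.1 z.2 x 0) (hseq z.1 z.2 y 0)} =
      {M | ¬ IsSpread δ (δ ^ 3) (relu (mulVec M x)) (relu (mulVec M y))} ×ˢ Set.univ := by
    ext z
    simp [hseq]
  rwa [hrect, initAW, measureReal_prod_prod, probReal_univ, mul_one]

lemma initAW_isSpread_hseq_and_not_succ_le (hm : 0 < m) (hℓ : ℓ < L) (hη : η ≤ 1 / 2)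
    (hδ : 0 ≤ δ) (hδ1 : δ ≤ 1) :
    (initAW 𝔡 m L).real {z | IsSpread δ η (hseq z.1 z.2 x ℓ) (hseq z.1 z.2 y ℓ) ∧
        ¬ IsSpread δ (η + δ ^ 3) (hseq z.1 z.2 x (ℓ + 1)) (hseq z.1 z.2 y (ℓ + 1))} ≤
      5 * Real.exp (-(δ ^ 6 * m / 864)) := by
  refine initAW_real_le_of_forall_update ⟨ℓ, hℓ⟩ ?_ (by positivity) fun A W ↦ ?_
  · exact (measurableSet_isSpread (measurable_hseq x hℓ.le) (measurable_hseq y hℓ.le)).inter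
      (measurableSet_isSpread (measurable_hseq x hℓ) (measurable_hseq y hℓ)).compl
  · simp only [Set.mem_ofPred_eq, hseq_succ hℓ, Function.update_self,
      hseq_update (k := ⟨ℓ, hℓ⟩) _ le_rfl]
    by_cases h : IsSpread δ η (hseq A W x ℓ) (hseq A W y ℓ)
    · simpa only [h, true_and] using h.gaussMat_not_relu_mulVec_le hm hη hδ hδ1
    · simp only [h, false_and, Set.ofPred_false, measureReal_empty]
      positivity

lemma initAW_exists_not_isSpread_hseq_le (hm : 0 < m) (h : IsSpread δ 0 x y) (hδ : 0 ≤ δ)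
    (hδ1 : δ ≤ 1) (hL : (L + 1) * δ ^ 3 ≤ 1 / 2) :
    (initAW 𝔡 m L).real
        {z | ∃ ℓ ≤ L, ¬ IsSpread δ ((ℓ + 1) * δ ^ 3) (hseq z.1 z.2 x ℓ) (hseq z.1 z.2 y ℓ)} ≤
      (L + 1) * (5 * Real.exp (-(δ ^ 6 * m / 864))) := by
  refine measureReal_exists_not_le (μ := initAW 𝔡 m L)
    (P := fun ℓ z ↦ IsSpread δ ((ℓ + 1) * δ ^ 3) (hseq z.1 z.2 x ℓ) (hseq z.1 z.2 y ℓ)) ?_ ?_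
  · simpa using initAW_not_isSpread_hseq_zero_le hm h hδ hδ1
  · intro ℓ hℓ
    have hη : ((ℓ : ℝ) + 1) * δ ^ 3 ≤ 1 / 2 := hL.trans' (by gcongr)
    simpa [add_one_mul] using
      initAW_isSpread_hseq_and_not_succ_le (x := x) (y := y) hm hℓ hη hδ hδ1

end Network

section UnionBound

lemma five_mul_mul_add_one_le_pow_six {n : ℕ} (hn : 2 ≤ n) (hL : 0 < L) :
    5 * ((n : ℝ) * (n - 1) * (L + 1)) ≤ (n * L) ^ 6 := by
  have hn2 : (2 : ℝ) ≤ n := by exact_mod_cast hn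
  have hL1 : (1 : ℝ) ≤ L := by exact_mod_cast hL
  calc 5 * ((n : ℝ) * (n - 1) * (L + 1)) ≤ 5 * (n * n * (L + L)) := by
        gcongr
        linarith
    _ ≤ 2 ^ 4 * (n ^ 2 * L) := by nlinarith [show (0 : ℝ) ≤ n ^ 2 * L by positivity]
    _ ≤ n ^ 4 * (n ^ 2 * L ^ 6) := by
        gcongr
        exact le_self_pow₀ hL1 (by norm_num)
    _ = (n * L) ^ 6 := by ring

lemma mul_five_mul_exp_neg_le_exp_neg {n : ℕ} (hL : 0 < L) {T : ℝ}
    (hT : 10 ^ 4 * L * Real.log (n * L) ≤ T) :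
    (n : ℝ) * (n - 1) * ((L + 1) * (5 * Real.exp (-(T / 864)))) ≤
      Real.exp (-(T / (10 ^ 4 * L))) := by
  have hdegenerate (h : (n : ℝ) * (n - 1) = 0) :
      (n : ℝ) * (n - 1) * ((L + 1) * (5 * Real.exp (-(T / 864)))) ≤
        Real.exp (-(T / (10 ^ 4 * L))) := by
    rw [h, zero_mul]
    positivity
  rcases n with _ | _ | n
  · exact hdegenerate (by simp)
  · exact hdegenerate (by simp)
  set N := n + 1 + 1
  have hL1 : (1 : ℝ) ≤ L := by exact_mod_cast hL
  have hNL : (1 : ℝ) ≤ N * L := by exact_mod_cast Nat.mul_pos (Nat.succ_pos _) hL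
  have hT0 : 0 ≤ T := hT.trans' (mul_nonneg (by positivity) (Real.log_nonneg hNL))
  have hlog : Real.log (N * L) ≤ T / (10 ^ 4 * L) := (le_div_iff₀' (by positivity)).2 hT
  have hrate : T / (10 ^ 4 * L) * 7 ≤ T / 864 := by
    rw [div_mul_eq_mul_div, div_le_div_iff₀ (by positivity) (by norm_num)]
    nlinarith
  calc (N : ℝ) * (N - 1) * ((L + 1) * (5 * Real.exp (-(T / 864))))
      = 5 * (N * (N - 1) * (L + 1)) * Real.exp (-(T / 864)) := by ring
    _ ≤ (N * L) ^ 6 * Real.exp (-(T / 864)) := by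
        gcongr
        exact five_mul_mul_add_one_le_pow_six (by lia) hL
    _ = Real.exp (6 * Real.log (N * L) - T / 864) := by
        rw [sub_eq_add_neg, Real.exp_add, ← Real.log_rpow (by positivity),
          Real.exp_log (by positivity)]
        norm_cast
    _ ≤ Real.exp (-(T / (10 ^ 4 * L))) := Real.exp_le_exp.2 (by linarith)

lemma add_one_mul_pow_three_le {ℓ : ℕ} (hL : 0 < L) (hℓ : ℓ ≤ L) {δ : ℝ} (hδ : 0 ≤ δ)
    (hδL : δ ≤ 1 / (10 ^ 4 * L)) : (ℓ + 1) * δ ^ 3 ≤ δ ^ 2 / 100 := by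
  have hL1 : (1 : ℝ) ≤ L := by exact_mod_cast hL
  have hℓL : (ℓ : ℝ) ≤ L := by exact_mod_cast hℓ
  rw [le_div_iff₀ (by positivity)] at hδL
  calc (ℓ + 1) * δ ^ 3 ≤ (L + L) * δ ^ 3 := by gcongr
    _ = 2 / 10 ^ 4 * (δ * (10 ^ 4 * L)) * δ ^ 2 := by ring
    _ ≤ 2 / 10 ^ 4 * 1 * δ ^ 2 := by gcongr
    _ ≤ δ ^ 2 / 100 := by linarith [sq_nonneg δ]

end UnionBound

end

theorem statement10_general :
    ∃ C : ℝ, 1 < C ∧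
      ∀ (𝔡 m L n : ℕ) (x : Fin n → Fin 𝔡 → ℝ) (δ : ℝ),
        0 < L → 0 < m → 0 < δ → δ ≤ 1 / (C * L) →
        C * (L : ℝ) * Real.log ((n : ℝ) * (L : ℝ)) / δ ^ 6 ≤ (m : ℝ) →
        (∀ i, l2 (x i) = 1) →
        (∀ i j, i ≠ j → δ ≤ l2 (x i - x j)) →
        ENNReal.ofReal (1 - Real.exp (-(δ ^ 6 * (m : ℝ) / (C * (L : ℝ))))) ≤
          initAW 𝔡 m L
            {z | ∀ i j : Fin n, i ≠ j → ∀ ℓ : ℕ, ℓ ≤ L →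
              δ / 2 ≤
                l2 (fun k =>
                  hseq z.1 z.2 (x j) ℓ k -
                    (dot (hseq z.1 z.2 (x i) ℓ) (hseq z.1 z.2 (x j) ℓ) /
                        l2 (hseq z.1 z.2 (x i) ℓ) ^ 2) *
                      hseq z.1 z.2 (x i) ℓ k)} := by
  refine ⟨10 ^ 4, by norm_num, fun 𝔡 m L n x δ hL hm hδ hδL hmL hx hsep ↦ ?_⟩
  have hδ1 : δ ≤ 1 := hδL.trans <| (div_le_one (by positivity)).2 <| by
    exact_mod_cast hL.trans_le (Nat.le_mul_of_pos_left L (by norm_num))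
  have hη {ℓ : ℕ} (hℓ : ℓ ≤ L) : (ℓ + 1) * δ ^ 3 ≤ δ ^ 2 / 100 :=
    add_one_mul_pow_three_le hL hℓ hδ.le hδL
  have hpair (i j) (hij : i ≠ j) := initAW_exists_not_isSpread_hseq_le (L := L) hm
    (isSpread_zero_of_l2 (hx i) (hx j) hδ.le (hsep i j hij)) hδ.le hδ1
    ((hη le_rfl).trans (by linarith [pow_le_one₀ hδ.le hδ1 (n := 2)]))
  have hbad := measureReal_exists_ne_le hpair
  rw [Fintype.card_fin] at hbad
  have hunion := mul_five_mul_exp_neg_le_exp_neg hL ((div_le_iff₀' (by positivity)).1 hmL)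
  refine ofReal_one_sub_le_of_compl_subset (hbad.trans hunion) fun z hz i j hij ℓ hℓ ↦ ?_
  have hspread : IsSpread δ ((ℓ + 1) * δ ^ 3) (hseq z.1 z.2 (x i) ℓ) (hseq z.1 z.2 (x j) ℓ) := by
    by_contra h
    exact hz ⟨i, j, hij, ℓ, hℓ, h⟩
  exact hspread.half_le_l2_residual (dotProduct_nonneg_of_nonneg hseq_nonneg hseq_nonneg) hδ1
    hδ.le (hη hℓ)

/-- Lemma 7.4, δ-separateness propagates through the layers. -/
theorem statement10 :
    ∃ C : ℝ, 1 < C ∧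
      ∀ (𝔡 m L n : ℕ) (h𝔡 : 0 < 𝔡) (hL : 2 ≤ L) (hm : 0 < m) (hn : 0 < n)
        (x : Fin n → Fin 𝔡 → ℝ) (δ : ℝ),
        0 < δ → δ ≤ 1 / (C * L) →
        C * (L : ℝ) * Real.log ((n : ℝ) * (L : ℝ)) / δ ^ 6 ≤ (m : ℝ) →
        (∀ i, l2 (x i) = 1) →
        (∀ i, x i ⟨𝔡 - 1, by omega⟩ = 1 / Real.sqrt 2) →
        (∀ i j, i ≠ j → δ ≤ l2 (x i - x j)) →
        ENNReal.ofReal (1 - Real.exp (-(δ ^ 6 * (m : ℝ) / (C * (L : ℝ))))) ≤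
          initAW 𝔡 m L
            {z | ∀ i j : Fin n, i ≠ j → ∀ ℓ : ℕ, ℓ ≤ L →
              δ / 2 ≤
                l2 (fun k =>
                  hseq z.1 z.2 (x j) ℓ k -
                    (dot (hseq z.1 z.2 (x i) ℓ) (hseq z.1 z.2 (x j) ℓ) /
                        l2 (hseq z.1 z.2 (x i) ℓ) ^ 2) *
                      hseq z.1 z.2 (x i) ℓ k)} := by
  obtain ⟨C, hC, h⟩ := statement10_general
  exact ⟨C, hC, fun 𝔡 m L n _ hL hm _ x δ hδ hδL hmL hx _ hsep ↦
    h 𝔡 m L n x δ (by lia) hm hδ hδL hmL hx hsep⟩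

end DNNPaper
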